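/- Let A be a finitely generated commutative unital ℝ-algebra, let f₁,…,f_k ∈ A, let T be the preordering of A generated by f₁,…,f_k, and let h₁,…,h_m ∈ A be such that each h_j is bounded on K(T), i.e. there is a constant C with |χ(h_j)| ≤ C for all χ ∈ K(T) and j = 1,…,m. Then T satisfies (SMP) if and only if for every λ ∈ h(K(T)) the preordering T_λ satisfies (SMP). -/

import Mathlib

open MeasureTheory

/-- The preordering of a commutative ring generated by a set `S`:
the smallest subset containing all squares and `S`, closed under addition
and multiplication. -/
inductive IsInPreordering {A : Type*} [CommRing A] (S : Set A) : A → Prop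
  | sq (a : A) : IsInPreordering S (a ^ 2)
  | gen {a : A} : a ∈ S → IsInPreordering S a
  | add {a b : A} : IsInPreordering S a → IsInPreordering S b → IsInPreordering S (a + b)
  | mul {a b : A} : IsInPreordering S a → IsInPreordering S b → IsInPreordering S (a * b)

/-- The positivity set `K(T)` of the preordering generated by `S`, inside the
character space `A →ₐ[ℝ] ℝ`. -/
def KSet {A : Type*} [CommRing A] [Algebra ℝ A] (S : Set A) : Set (A →ₐ[ℝ] ℝ) :=
  {χ | ∀ a : A, IsInPreordering S a → 0 ≤ χ a}

/-- The character space carries the topology of pointwise convergence. -/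
noncomputable instance charTop (A : Type*) [CommRing A] [Algebra ℝ A] :
    TopologicalSpace (A →ₐ[ℝ] ℝ) :=
  TopologicalSpace.induced (fun χ (a : A) => χ a) Pi.topologicalSpace

/-- The Borel σ-algebra on the character space. -/
noncomputable instance charMeas (A : Type*) [CommRing A] [Algebra ℝ A] :
    MeasurableSpace (A →ₐ[ℝ] ℝ) := borel _

/-- `L` is a `K(S)`-moment functional: it is given by integration against a positive
Borel measure on the character space supported on `K(S)`. -/
def IsKMomentFunctional {A : Type*} [CommRing A] [Algebra ℝ A] (S : Set A)
    (L : A →ₗ[ℝ] ℝ) : Prop :=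
  ∃ μ : Measure (A →ₐ[ℝ] ℝ), μ (KSet S)ᶜ = 0 ∧
    ∀ a : A, Integrable (fun χ : A →ₐ[ℝ] ℝ => χ a) μ ∧ L a = ∫ χ : A →ₐ[ℝ] ℝ, χ a ∂μ

/-- The preordering generated by `S` has the strong moment property (SMP): every
linear functional nonnegative on it is a moment functional with representing
measure supported on `K(S)`. -/
def HasSMP {A : Type*} [CommRing A] [Algebra ℝ A] (S : Set A) : Prop :=
  ∀ L : A →ₗ[ℝ] ℝ, (∀ a : A, IsInPreordering S a → 0 ≤ L a) → IsKMomentFunctional S L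

/-- The generators of the fibre preordering `T_λ`. -/
def fibreGens {A : Type*} [CommRing A] [Algebra ℝ A] {k m : ℕ}
    (f : Fin k → A) (h : Fin m → A) (lam : Fin m → ℝ) : Set A :=
  Set.range f ∪ ⋃ j : Fin m,
    {h j - algebraMap ℝ A (lam j), algebraMap ℝ A (lam j) - h j}


open Polynomial in
/-- Intermediate value property for polynomials. -/
def HasIVT (R : Type*) [Field R] [LinearOrder R] : Prop :=
  ∀ (p : R[X]) (a b : R), a < b → p.eval a * p.eval b < 0 → ∃ c, a < c ∧ c < b ∧ p.eval c = 0

namespace HasIVT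
open Polynomial

lemma real : HasIVT ℝ := by
  intro p a b hab hlt
  have hc : ContinuousOn (fun x => p.eval x) (Set.Icc a b) := p.continuous.continuousOn
  rcases mul_neg_iff.1 hlt with ⟨h1, h2⟩ | ⟨h1, h2⟩
  · obtain ⟨c, hc1, hc2⟩ := intermediate_value_Ioo' hab.le hc ⟨h2, h1⟩
    exact ⟨c, hc1.1, hc1.2, hc2⟩
  · obtain ⟨c, hc1, hc2⟩ := intermediate_value_Ioo hab.le hc ⟨h1, h2⟩
    exact ⟨c, hc1.1, hc1.2, hc2⟩

variable {R : Type*} [Field R] [LinearOrder R] [IsStrictOrderedRing R]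

lemma factor_root (q : R[X]) (hq : q ≠ 0) (a : R) (ha : q.eval a = 0) :
    ∃ (m : ℕ) (g : R[X]), q = (X - C a) ^ (m + 1) * g ∧ g.eval a ≠ 0 := by
  obtain ⟨g, hg, hg2⟩ := Polynomial.exists_eq_pow_rootMultiplicity_mul_and_not_dvd q hq a
  have hpos : 0 < q.rootMultiplicity a := (rootMultiplicity_pos hq).2 ha
  refine ⟨q.rootMultiplicity a - 1, g, ?_, ?_⟩
  · rw [Nat.sub_add_cancel hpos]; exact hg
  · intro h; exact hg2 (dvd_iff_isRoot.2 h)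

lemma rolle_aux (H : HasIVT R) (q : R[X]) (a b : R) (hab : a < b) (hq : q ≠ 0)
    (ha : q.eval a = 0) (hb : q.eval b = 0) (hno : ∀ c, a < c → c < b → q.eval c ≠ 0) :
    ∃ c, a < c ∧ c < b ∧ q.derivative.eval c = 0 := by
  obtain ⟨m, g, hg, hga⟩ := factor_root q hq a ha
  have hg0 : g ≠ 0 := by rintro rfl; simp at hga
  have hgb : g.eval b = 0 := by
    rw [hg] at hb; simp at hb
    rcases hb with hb | hb
    · exact absurd hb (sub_ne_zero.2 hab.ne')
    · exact hb
  obtain ⟨n, k, hk, hkb⟩ := factor_root g hg0 b hgb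
  have hka : k.eval a ≠ 0 := by
    intro h; apply hga; rw [hk]; simp [h]
  have hsame : 0 < k.eval a * k.eval b := by
    by_contra hlt
    have hne : k.eval a * k.eval b ≠ 0 := mul_ne_zero hka hkb
    obtain ⟨c, h1, h2, h3⟩ := H k a b hab (lt_of_le_of_ne (not_lt.1 hlt) hne)
    apply hno c h1 h2
    rw [hg, hk]; simp [h3]
  set h : R[X] := C ((m:R) + 1) * (X - C b) * k + C ((n:R)+1) * (X - C a) * k
      + (X - C a) * (X - C b) * derivative k with hh
  have hd : derivative q = (X - C a) ^ m * (X - C b) ^ n * h := by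
    rw [hg, hk, hh]
    simp only [derivative_mul, derivative_pow, derivative_sub, derivative_X, derivative_C]
    push_cast
    simp only [map_add, map_one, map_natCast, Nat.add_sub_cancel]
    ring
  have e1 : h.eval a = ((m:R)+1) * (a - b) * k.eval a := by rw [hh]; simp
  have e2 : h.eval b = ((n:R)+1) * (b - a) * k.eval b := by rw [hh]; simp
  have hneg : h.eval a * h.eval b < 0 := by
    rw [e1, e2]
    have : (0:R) < ((m:R)+1) * ((n:R)+1) * (b-a)^2 * (k.eval a * k.eval b) := by
      have := sub_pos.2 hab
      positivity
    nlinarith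
  obtain ⟨c, h1, h2, h3⟩ := H h a b hab hneg
  exact ⟨c, h1, h2, by rw [hd]; simp [h3]⟩

lemma rolle (H : HasIVT R) (q : R[X]) (a b : R) (hab : a < b)
    (ha : q.eval a = 0) (hb : q.eval b = 0) :
    ∃ c, a < c ∧ c < b ∧ q.derivative.eval c = 0 := by
  by_cases hq : q = 0
  · subst hq
    obtain ⟨c, h1, h2⟩ := exists_between hab
    exact ⟨c, h1, h2, by simp⟩
  · classical
    set S := (q.roots.toFinset).filter (fun c => a < c) with hS
    have hbS : b ∈ S := by simp [hS, hq, hb, hab]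
    have hne : S.Nonempty := ⟨b, hbS⟩
    set b' := S.min' hne
    have hb' : b' ∈ S := S.min'_mem hne
    have hb'2 : b' ≤ b := S.min'_le _ hbS
    have h3 : q.eval b' = 0 ∧ a < b' := by
      simp [hS, hq] at hb'; exact hb'
    obtain ⟨c, h1, h2, h4⟩ := rolle_aux H q a b' h3.2 hq ha h3.1 (by
      intro c hc1 hc2 hc3
      have : c ∈ S := by simp [hS, hq, hc3, hc1]
      exact absurd (S.min'_le _ this) (not_le.2 hc2))
    exact ⟨c, h1, h2.trans_le hb'2, h4⟩

lemma mvt (H : HasIVT R) (p : R[X]) (a b : R) (hab : a < b) :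
    ∃ c, a < c ∧ c < b ∧ p.eval b - p.eval a = p.derivative.eval c * (b - a) := by
  set s := (p.eval b - p.eval a) / (b - a) with hs
  have hne : b - a ≠ 0 := (sub_pos.2 hab).ne'
  have hs2 : s * (b - a) = p.eval b - p.eval a := div_mul_cancel₀ _ hne
  obtain ⟨c, h1, h2, h3⟩ := rolle H (p - C (p.eval a) - C s * (X - C a)) a b hab (by simp)
    (by simp; linear_combination -hs2)
  refine ⟨c, h1, h2, ?_⟩
  simp at h3
  rw [← hs2, sub_eq_zero.1 h3]

lemma lt_of_deriv_pos (H : HasIVT R) (p : R[X]) (a b : R) (hab : a < b)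
    (h : ∀ c, a < c → c < b → 0 < p.derivative.eval c) : p.eval a < p.eval b := by
  obtain ⟨c, h1, h2, h3⟩ := mvt H p a b hab
  have := mul_pos (h c h1 h2) (sub_pos.2 hab)
  linarith

/-- a nonconstant polynomial with positive derivative far left takes negative values. -/
lemma exists_neg_left (H : HasIVT R) (p : R[X]) (hp : 0 < p.natDegree) (x : R)
    (h : ∀ c, c < x → 0 < p.derivative.eval c) : ∃ t, t < x ∧ p.eval t < 0 := by
  have ht := Polynomial.tendsto_abv_atTop (abs : R → R) p (natDegree_pos_iff_degree_pos.1 hp)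
    (l := Filter.atBot) (z := id) (by simpa using Filter.tendsto_abs_atBot_atTop)
  have h1 := ht.eventually (Filter.eventually_gt_atTop |p.eval x|)
  obtain ⟨t, ht1, ht2⟩ := (h1.and (Filter.eventually_lt_atBot x)).exists
  refine ⟨t, ht2, ?_⟩
  have h3 := lt_of_deriv_pos H p t x ht2 (fun c _ hc => h c hc)
  by_contra hcon
  simp only [id] at ht1
  rw [abs_of_nonneg (not_lt.1 hcon)] at ht1
  exact absurd (lt_of_lt_of_le ht1 h3.le) (not_lt.2 (le_abs_self _))

lemma exists_pos_right (H : HasIVT R) (p : R[X]) (hp : 0 < p.natDegree) (x : R)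
    (h : ∀ c, x < c → 0 < p.derivative.eval c) : ∃ t, x < t ∧ 0 < p.eval t := by
  have ht := Polynomial.tendsto_abv_atTop (abs : R → R) p (natDegree_pos_iff_degree_pos.1 hp)
    (l := Filter.atTop) (z := id) (by simpa using Filter.tendsto_abs_atTop_atTop)
  have h1 := ht.eventually (Filter.eventually_gt_atTop |p.eval x|)
  obtain ⟨t, ht1, ht2⟩ := (h1.and (Filter.eventually_gt_atTop x)).exists
  refine ⟨t, ht2, ?_⟩
  have h3 := lt_of_deriv_pos H p x t ht2 (fun c hc _ => h c hc)
  by_contra hcon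
  simp only [id] at ht1
  rw [abs_of_nonpos (not_lt.1 hcon)] at ht1
  have := neg_abs_le (p.eval x)
  linarith

end HasIVT


namespace HasIVT
open Polynomial

/-- Equality of signs across two ordered fields. -/
def SameSign {R S : Type*} [Zero R] [Zero S] [LT R] [LT S] (a : R) (b : S) : Prop :=
  (0 < a ↔ 0 < b) ∧ (a < 0 ↔ b < 0)

section SameSign
variable {R S : Type*} [Field R] [LinearOrder R] [IsStrictOrderedRing R]
  [Field S] [LinearOrder S] [IsStrictOrderedRing S]

lemma SameSign.symm {a : R} {b : S} (h : SameSign a b) : SameSign b a := ⟨h.1.symm, h.2.symm⟩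

lemma SameSign.eq_zero {a : R} {b : S} (h : SameSign a b) : a = 0 ↔ b = 0 := by
  have h1 := h.1
  have h2 := h.2
  constructor
  · rintro rfl
    simp at h1 h2
    exact le_antisymm h1 h2
  · rintro rfl
    simp at h1 h2
    exact le_antisymm h1 h2

lemma SameSign.nonneg {a : R} {b : S} (h : SameSign a b) : 0 ≤ a ↔ 0 ≤ b := by
  rw [← not_lt, ← not_lt, h.2]

lemma SameSign.nonpos {a : R} {b : S} (h : SameSign a b) : a ≤ 0 ↔ b ≤ 0 := by
  rw [← not_lt, ← not_lt, h.1]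

lemma SameSign.neg {a : R} {b : S} (h : SameSign a b) : SameSign (-a) (-b) := by
  constructor
  · simpa using h.2
  · simpa using h.1

lemma sameSign_of {a : R} {b : S} (h1 : 0 < a → 0 < b) (h2 : a < 0 → b < 0) (h3 : a = 0 → b = 0) :
    SameSign a b := by
  rcases lt_trichotomy a 0 with h | h | h
  · have := h2 h
    exact ⟨by constructor <;> intro h' <;> order, by simp [*]⟩
  · have := h3 h
    simp [SameSign, *]
  · have := h1 h
    exact ⟨by simp [*], by constructor <;> intro h' <;> order⟩

end SameSign

variable {R S : Type*} [Field R] [LinearOrder R] [IsStrictOrderedRing R]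
  [Field S] [LinearOrder S] [IsStrictOrderedRing S]

/-- `x` and `y` have the same position relative to the matched points `G`. -/
def Rel (G : Set (R × S)) (x : R) (y : S) : Prop :=
  ∀ g ∈ G, (x < g.1 ↔ y < g.2) ∧ (g.1 < x ↔ g.2 < y)

/-- Matched points are in strictly monotone correspondence. -/
def MonoG (G : Set (R × S)) : Prop := ∀ g ∈ G, ∀ g' ∈ G, (g.1 < g'.1 ↔ g.2 < g'.2)

lemma MonoG.rel {G : Set (R × S)} (h : MonoG G) {g : R × S} (hg : g ∈ G) : Rel G g.1 g.2 :=
  fun g' hg' => ⟨h g hg g' hg', h g' hg' g hg⟩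

structure Setup (G : Set (R × S)) (a : R[X]) (b : S[X]) : Prop where
  ivt1 : HasIVT R
  ivt2 : HasIVT S
  fin : G.Finite
  mono : MonoG G
  der : ∀ x y, Rel G x y → SameSign (a.derivative.eval x) (b.derivative.eval y)
  sgn : ∀ g ∈ G, SameSign (a.eval g.1) (b.eval g.2)
  d1 : 0 < a.natDegree
  d2 : 0 < b.natDegree

lemma Rel.swap {G : Set (R × S)} {x : R} {y : S} (h : Rel G x y) : Rel (Prod.swap ⁻¹' G) y x :=
  fun g hg => ⟨(h _ hg).1.symm, (h _ hg).2.symm⟩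

lemma Rel.unswap {G : Set (R × S)} {x : R} {y : S} (h : Rel (Prod.swap ⁻¹' G) y x) : Rel G x y :=
  fun g hg => ⟨(h g.swap hg).1.symm, (h g.swap hg).2.symm⟩

lemma Setup.swap {G : Set (R × S)} {a : R[X]} {b : S[X]} (h : Setup G a b) :
    Setup (Prod.swap ⁻¹' G) b a where
  ivt1 := h.ivt2
  ivt2 := h.ivt1
  fin := h.fin.preimage (Prod.swap_injective.injOn)
  mono := fun g hg g' hg' => (h.mono _ hg _ hg').symm
  der := fun x y hxy => (h.der y x hxy.unswap).symm
  sgn := fun g hg => (h.sgn _ hg).symm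
  d1 := h.d2
  d2 := h.d1

lemma Setup.neg {G : Set (R × S)} {a : R[X]} {b : S[X]} (h : Setup G a b) :
    Setup G (-a) (-b) where
  ivt1 := h.ivt1
  ivt2 := h.ivt2
  fin := h.fin
  mono := h.mono
  der := fun x y hxy => by simpa using (h.der x y hxy).neg
  sgn := fun g hg => by simpa using (h.sgn g hg).neg
  d1 := by simpa using h.d1
  d2 := by simpa using h.d2

lemma left_nbr {G : Set (R × S)} (hG : G.Finite) (x : R) :
    (∃ g ∈ G, g.1 < x ∧ ∀ g' ∈ G, g'.1 < x → g'.1 ≤ g.1) ∨ (∀ g ∈ G, ¬ g.1 < x) := by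
  by_cases h : ∃ g ∈ G, g.1 < x
  · left
    have hf : {g ∈ G | g.1 < x}.Finite := hG.subset (Set.sep_subset _ _)
    obtain ⟨g, hg, hmax⟩ := hf.exists_maximalFor Prod.fst _ h
    refine ⟨g, hg.1, hg.2, fun g' hg' hlt => ?_⟩
    by_contra hcon
    exact hcon (hmax ⟨hg', hlt⟩ (not_le.1 hcon).le)
  · right
    push Not at h
    intro g hg; exact not_lt.2 (h g hg)

lemma right_nbr {G : Set (R × S)} (hG : G.Finite) (x : R) :
    (∃ g ∈ G, x < g.1 ∧ ∀ g' ∈ G, x < g'.1 → g.1 ≤ g'.1) ∨ (∀ g ∈ G, ¬ x < g.1) := by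
  by_cases h : ∃ g ∈ G, x < g.1
  · left
    have hf : {g ∈ G | x < g.1}.Finite := hG.subset (Set.sep_subset _ _)
    obtain ⟨g, hg, hmax⟩ := hf.exists_minimalFor Prod.fst _ h
    refine ⟨g, hg.1, hg.2, fun g' hg' hlt => ?_⟩
    by_contra hcon
    exact hcon (hmax ⟨hg', hlt⟩ (not_le.1 hcon).le)
  · right
    push Not at h
    intro g hg; exact not_lt.2 (h g hg)

lemma Rel.move {G : Set (R × S)} {x x' : R} {y : S} (h : Rel G x y)
    (ho : ∀ g ∈ G, g.1 ≠ x) (h1 : ∀ g ∈ G, g.1 < x → g.1 < x') (h2 : ∀ g ∈ G, x < g.1 → x' < g.1) :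
    Rel G x' y := by
  intro g hg
  rcases lt_or_gt_of_ne (ho g hg) with hlt | hlt
  · have := h1 g hg hlt
    have h3 := (h g hg).2.1 hlt
    exact ⟨⟨fun h => by order, fun h => by order⟩, by simp [*]⟩
  · have := h2 g hg hlt
    have h3 := (h g hg).1.1 hlt
    exact ⟨by simp [*], ⟨fun h => by order, fun h => by order⟩⟩

lemma Rel.open' {G : Set (R × S)} {x : R} {y : S} (h : Rel G x y)
    (ho : ∀ g ∈ G, g.1 ≠ x) : ∀ g ∈ G, g.2 ≠ y := by
  intro g hg he
  rcases lt_or_gt_of_ne (ho g hg) with hlt | hlt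
  · exact absurd ((h g hg).2.1 hlt) (by simp [he])
  · exact absurd ((h g hg).1.1 hlt) (by simp [he])

/-- Moving on the right-hand side. -/
lemma Rel.move' {G : Set (R × S)} {x : R} {y y' : S} (h : Rel G x y)
    (ho : ∀ g ∈ G, g.1 ≠ x) (h1 : ∀ g ∈ G, g.2 < y → g.2 < y') (h2 : ∀ g ∈ G, y < g.2 → y' < g.2) :
    Rel G x y' := by
  have ho' := h.open' ho
  exact (h.swap.move (fun g hg => ho' _ hg) (fun g hg => h1 _ hg) (fun g hg => h2 _ hg)).unswap

lemma Rel.exists_right [IsStrictOrderedRing R] {G : Set (R × S)} (hG : G.Finite) {x : R} {y : S} (h : Rel G x y)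
    (ho : ∀ g ∈ G, g.1 ≠ x) : ∃ t, x < t ∧ ∀ s, x ≤ s → s < t → Rel G s y := by
  rcases right_nbr hG x with ⟨g, hg, h1, h2⟩ | h1
  · refine ⟨g.1, h1, fun s hs hst => h.move ho (fun g' hg' hlt => by order) (fun g' hg' hlt => ?_)⟩
    have := h2 g' hg' hlt
    order
  · exact ⟨x + 1, by simp, fun s hs hst => h.move ho (fun g' hg' hlt => by order)
      (fun g' hg' hlt => absurd hlt (h1 g' hg'))⟩

lemma Setup.der_ne {G : Set (R × S)} {a : R[X]} {b : S[X]} (H : Setup G a b) {x : R} {y : S}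
    (h : Rel G x y) (ho : ∀ g ∈ G, g.1 ≠ x) : a.derivative.eval x ≠ 0 := by
  intro h0
  obtain ⟨t, ht, hs⟩ := h.exists_right H.fin ho
  have hb := ((H.der x y h).eq_zero).1 h0
  have hz : a.derivative = 0 := by
    apply Polynomial.eq_zero_of_infinite_isRoot
    apply (Set.Ioo_infinite ht).mono
    intro s hs'
    exact ((H.der s y (hs s hs'.1.le hs'.2)).eq_zero).2 hb
  have := Polynomial.natDegree_eq_zero_of_derivative_eq_zero hz
  have := H.d1
  omega

/-- within a cell, the second polynomial is increasing if the first has positive derivative. -/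
lemma Setup.der_pos {G : Set (R × S)} {a : R[X]} {b : S[X]} (H : Setup G a b) {x x' : R} {y : S}
    (h : Rel G x y) (h' : Rel G x' y) (hp : 0 < a.derivative.eval x) :
    0 < a.derivative.eval x' :=
  (H.der x' y h').1.2 ((H.der x y h).1.1 hp)

lemma Setup.lemA {G : Set (R × S)} {a : R[X]} {b : S[X]} (H : Setup G a b) {x : R} {y : S}
    (h : Rel G x y) (ho : ∀ g ∈ G, g.1 ≠ x) (hp : 0 < a.derivative.eval x) (hx : a.eval x ≤ 0) :
    ∃ t, t < y ∧ b.eval t < 0 ∧ ∀ s, t < s → s ≤ y → Rel G x s := by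
  rcases left_nbr H.fin x with ⟨g, hg, h1, h2⟩ | h1
  · refine ⟨g.2, (h g hg).2.1 h1, ?_, ?_⟩
    · refine (H.sgn g hg).2.1 (lt_of_lt_of_le ?_ hx)
      refine lt_of_deriv_pos H.ivt1 a _ _ h1 (fun c hc1 hc2 => ?_)
      refine H.der_pos h (h.move ho ?_ ?_) hp
      · intro g' hg' hlt
        exact lt_of_le_of_lt (h2 g' hg' hlt) hc1
      · intro g' hg' hlt; order
    · intro s hs1 hs2
      refine h.move' ho ?_ ?_
      · intro g' hg' hlt
        have h3 := h2 g' hg' ((h g' hg').2.2 hlt)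
        have h4 : g'.2 ≤ g.2 := by
          rw [← not_lt, ← H.mono g hg g' hg']; exact not_lt.2 h3
        order
      · intro g' hg' hlt; order
  · have hc : ∀ s, s ≤ y → Rel G x s := by
      intro s hs
      refine h.move' ho ?_ ?_
      · intro g' hg' hlt
        exact absurd ((h g' hg').2.2 hlt) (h1 g' hg')
      · intro g' hg' hlt; order
    obtain ⟨t, ht1, ht2⟩ := exists_neg_left H.ivt2 b H.d2 y (fun c hcy =>
      (H.der x c (hc c hcy.le)).1.1 hp)
    exact ⟨t, ht1, ht2, fun s _ hs => hc s hs⟩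

lemma Setup.lemA' {G : Set (R × S)} {a : R[X]} {b : S[X]} (H : Setup G a b) {x : R} {y : S}
    (h : Rel G x y) (ho : ∀ g ∈ G, g.1 ≠ x) (hp : 0 < a.derivative.eval x) (hx : 0 ≤ a.eval x) :
    ∃ t, y < t ∧ 0 < b.eval t ∧ ∀ s, y ≤ s → s < t → Rel G x s := by
  rcases right_nbr H.fin x with ⟨g, hg, h1, h2⟩ | h1
  · refine ⟨g.2, (h g hg).1.1 h1, ?_, ?_⟩
    · refine (H.sgn g hg).1.1 (lt_of_le_of_lt hx ?_)
      refine lt_of_deriv_pos H.ivt1 a _ _ h1 (fun c hc1 hc2 => ?_)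
      refine H.der_pos h (h.move ho ?_ ?_) hp
      · intro g' hg' hlt; order
      · intro g' hg' hlt
        exact lt_of_lt_of_le hc2 (h2 g' hg' hlt)
    · intro s hs1 hs2
      refine h.move' ho ?_ ?_
      · intro g' hg' hlt; order
      · intro g' hg' hlt
        have h3 := h2 g' hg' ((h g' hg').1.2 hlt)
        have h4 : g.2 ≤ g'.2 := by
          rw [← not_lt, ← H.mono g' hg' g hg]; exact not_lt.2 h3
        order
  · have hc : ∀ s, y ≤ s → Rel G x s := by
      intro s hs
      refine h.move' ho ?_ ?_
      · intro g' hg' hlt; order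
      · intro g' hg' hlt
        exact absurd ((h g' hg').1.2 hlt) (h1 g' hg')
    obtain ⟨t, ht1, ht2⟩ := exists_pos_right H.ivt2 b H.d2 y (fun c hcy =>
      (H.der x c (hc c hcy.le)).1.1 hp)
    exact ⟨t, ht1, ht2, fun s hs _ => hc s hs⟩

lemma Setup.lemE_pos {G : Set (R × S)} {a : R[X]} {b : S[X]} (H : Setup G a b) {x : R} {y : S}
    (h : Rel G x y) (ho : ∀ g ∈ G, g.1 ≠ x) (hp : 0 < a.derivative.eval x) (hx : a.eval x = 0) :
    ∃ r, b.eval r = 0 ∧ Rel G x r := by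
  obtain ⟨t, h1, h2, h3⟩ := H.lemA h ho hp hx.le
  obtain ⟨t', h1', h2', h3'⟩ := H.lemA' h ho hp hx.ge
  obtain ⟨c, hc1, hc2, hc3⟩ := H.ivt2 b t t' (h1.trans h1') (mul_neg_of_neg_of_pos h2 h2')
  refine ⟨c, hc3, ?_⟩
  rcases le_total c y with hcy | hcy
  · exact h3 c hc1 hcy
  · exact h3' c hcy hc2

lemma Setup.lemE {G : Set (R × S)} {a : R[X]} {b : S[X]} (H : Setup G a b) {x : R} {y : S}
    (h : Rel G x y) (ho : ∀ g ∈ G, g.1 ≠ x) (hx : a.eval x = 0) :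
    ∃ r, b.eval r = 0 ∧ Rel G x r := by
  rcases lt_or_gt_of_ne (H.der_ne h ho) with hp | hp
  · obtain ⟨r, h1, h2⟩ := H.neg.lemE_pos h ho (by simpa using hp) (by simpa using hx)
    exact ⟨r, by simpa using h1, h2⟩
  · exact H.lemE_pos h ho hp hx

/-- Refined matching after inserting the roots of `a`, `b`. -/
def refineG (G : Set (R × S)) (a : R[X]) (b : S[X]) : Set (R × S) :=
  G ∪ {g | a.eval g.1 = 0 ∧ b.eval g.2 = 0 ∧ Rel G g.1 g.2}

lemma refine_neg (G : Set (R × S)) (a : R[X]) (b : S[X]) : refineG G (-a) (-b) = refineG G a b := by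
  simp [refineG]

lemma Setup.fwd_pos {G : Set (R × S)} {a : R[X]} {b : S[X]} (H : Setup G a b) {x : R} {y : S}
    (h : Rel (refineG G a b) x y) (ho : ∀ g ∈ G, g.1 ≠ x) (hp : 0 < a.derivative.eval x) :
    SameSign (a.eval x) (b.eval y) := by
  have hG : Rel G x y := fun g hg => h g (Or.inl hg)
  have ho' := hG.open' ho
  have hpy : 0 < b.derivative.eval y := (H.der x y hG).1.1 hp
  refine sameSign_of ?_ ?_ ?_
  · intro hx
    by_contra hy
    obtain ⟨t, h1, h2, h3⟩ := H.swap.lemA hG.swap (fun g hg => ho' _ hg) hpy (not_lt.1 hy)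
    obtain ⟨r, hr1, hr2, hr3⟩ := H.ivt1 a t x h1 (mul_neg_of_neg_of_pos h2 hx)
    have hr4 : Rel G r y := (h3 r hr1 hr2.le).unswap
    have hor : ∀ g ∈ G, g.1 ≠ r := fun g hg he =>
      (hr4.swap.open' (fun g hg => ho' _ hg)) g.swap hg he
    obtain ⟨s, hs1, hs2⟩ := H.lemE hr4 hor hr3
    have hlt : s < y := (h (r, s) (Or.inr ⟨hr3, hs1, hs2⟩)).2.1 hr2
    have := lt_of_deriv_pos H.ivt2 b s y hlt (fun c hc1 hc2 => by
      have hxc : Rel G x c := by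
        refine hG.move' ho ?_ ?_
        · intro g hg hlt'
          have h5 : g.1 < x := (hG g hg).2.2 hlt'
          have h6 : g.1 < r := (hr4 g hg).2.2 hlt'
          have := (hs2 g hg).2.1 h6
          order
        · intro g hg hlt'; order
      exact (H.der x c hxc).1.1 hp)
    rw [hs1] at this
    exact hy this
  · intro hx
    by_contra hy
    obtain ⟨t, h1, h2, h3⟩ := H.swap.lemA' hG.swap (fun g hg => ho' _ hg) hpy (not_lt.1 hy)
    obtain ⟨r, hr1, hr2, hr3⟩ := H.ivt1 a x t h1 (mul_neg_of_neg_of_pos hx h2)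
    have hr4 : Rel G r y := (h3 r hr1.le hr2).unswap
    have hor : ∀ g ∈ G, g.1 ≠ r := fun g hg he =>
      (hr4.swap.open' (fun g hg => ho' _ hg)) g.swap hg he
    obtain ⟨s, hs1, hs2⟩ := H.lemE hr4 hor hr3
    have hlt : y < s := (h (r, s) (Or.inr ⟨hr3, hs1, hs2⟩)).1.1 hr1
    have := lt_of_deriv_pos H.ivt2 b y s hlt (fun c hc1 hc2 => by
      have hxc : Rel G x c := by
        refine hG.move' ho ?_ ?_
        · intro g hg hlt'; order
        · intro g hg hlt'
          have h6 : r < g.1 := (hr4 g hg).1.2 hlt'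
          have := (hs2 g hg).1.1 h6
          order
      exact (H.der x c hxc).1.1 hp)
    rw [hs1] at this
    exact hy this
  · intro hx
    obtain ⟨s, hs1, hs2⟩ := H.lemE hG ho hx
    have h5 := h (x, s) (Or.inr ⟨hx, hs1, hs2⟩)
    simp at h5
    rw [le_antisymm h5.2 h5.1]; exact hs1

lemma Setup.fwd {G : Set (R × S)} {a : R[X]} {b : S[X]} (H : Setup G a b) {x : R} {y : S}
    (h : Rel (refineG G a b) x y) : SameSign (a.eval x) (b.eval y) := by
  have hG : Rel G x y := fun g hg => h g (Or.inl hg)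
  by_cases ho : ∀ g ∈ G, g.1 ≠ x
  · rcases lt_or_gt_of_ne (H.der_ne hG ho) with hp | hp
    · have := (H.neg.fwd_pos (by rwa [refine_neg]) ho (by simpa using hp)).neg
      simpa using this
    · exact H.fwd_pos h ho hp
  · push Not at ho
    obtain ⟨g, hg, rfl⟩ := ho
    have h5 := hG g hg
    simp at h5
    rw [← le_antisymm h5.1 h5.2]; exact H.sgn g hg

lemma Setup.mono_new {G : Set (R × S)} {a : R[X]} {b : S[X]} (H : Setup G a b) {r r' : R} {s s' : S}
    (h : Rel G r s) (h' : Rel G r' s') (hr : a.eval r = 0) (hr' : a.eval r' = 0) (hlt : r < r') :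
    s < s' := by
  by_cases ho : ∀ g ∈ G, g.1 ≠ r
  · by_cases hm : ∃ g ∈ G, r < g.1 ∧ g.1 ≤ r'
    · obtain ⟨g, hg, h1, h2⟩ := hm
      have h3 := (h g hg).1.1 h1
      have h4 := (h' g hg).1
      have : g.2 ≤ s' := by
        rw [← not_lt, ← h4]; exact not_lt.2 h2
      order
    · exfalso
      push Not at hm
      obtain ⟨c, hc1, hc2, hc3⟩ := rolle H.ivt1 a r r' hlt hr hr'
      have hc : Rel G c s := h.move ho (fun g hg hlt' => by order) (fun g hg hlt' => by
        have := hm g hg hlt'; order)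
      refine H.der_ne hc (fun g hg he => ?_) hc3
      have := hm g hg (by rw [he]; exact hc1)
      rw [he] at this; order
  · push Not at ho
    obtain ⟨g, hg, rfl⟩ := ho
    have h5 := h g hg
    simp at h5
    rw [← le_antisymm h5.1 h5.2]
    exact (h' g hg).2.1 hlt

lemma Setup.mono_refine {G : Set (R × S)} {a : R[X]} {b : S[X]} (H : Setup G a b) :
    MonoG (refineG G a b) := by
  rintro g (hg | hg) g' (hg' | hg')
  · exact H.mono g hg g' hg'
  · exact (hg'.2.2 g hg).2
  · exact (hg.2.2 g' hg').1
  · exact ⟨H.mono_new hg.2.2 hg'.2.2 hg.1 hg'.1,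
      H.swap.mono_new hg.2.2.swap hg'.2.2.swap hg.2.1 hg'.2.1⟩

lemma Setup.fin_refine {G : Set (R × S)} {a : R[X]} {b : S[X]} (H : Setup G a b) :
    (refineG G a b).Finite := by
  refine H.fin.union ?_
  have ha : a ≠ 0 := by rintro rfl; simpa using H.d1
  have hb : b ≠ 0 := by rintro rfl; simpa using H.d2
  refine ((a.finite_setOf_isRoot ha).prod (b.finite_setOf_isRoot hb)).subset ?_
  rintro g ⟨h1, h2, -⟩
  exact ⟨h1, h2⟩

/-- Every point has a partner. -/
lemma exists_partner {G : Set (R × S)} (hG : G.Finite) (hm : MonoG G) (x : R) :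
    ∃ y, Rel G x y := by
  by_cases ho : ∀ g ∈ G, g.1 ≠ x
  · have key : ∀ y : S, (∀ g ∈ G, g.1 < x → g.2 < y) → (∀ g ∈ G, x < g.1 → y < g.2) → Rel G x y := by
      intro y h1 h2 g hg
      rcases lt_or_gt_of_ne (ho g hg) with hlt | hlt
      · have := h1 g hg hlt
        exact ⟨⟨fun h => by order, fun h => by order⟩, by simp [*]⟩
      · have := h2 g hg hlt
        exact ⟨by simp [*], ⟨fun h => by order, fun h => by order⟩⟩
    have hle : ∀ g ∈ G, ∀ g' ∈ G, g.1 ≤ g'.1 → g.2 ≤ g'.2 := by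
      intro g hg g' hg' h
      rw [← not_lt, ← hm g' hg' g hg]; exact not_lt.2 h
    rcases left_nbr hG x with ⟨g, hg, h1, h2⟩ | h1 <;>
    rcases right_nbr hG x with ⟨g', hg', h1', h2'⟩ | h1'
    · obtain ⟨y, hy1, hy2⟩ := exists_between ((hm g hg g' hg').1 (h1.trans h1'))
      exact ⟨y, key y (fun k hk hlt => lt_of_le_of_lt (hle k hk g hg (h2 k hk hlt)) hy1)
        (fun k hk hlt => lt_of_lt_of_le hy2 (hle g' hg' k hk (h2' k hk hlt)))⟩
    · exact ⟨g.2 + 1, key _ (fun k hk hlt => lt_of_le_of_lt (hle k hk g hg (h2 k hk hlt)) (by simp))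
        (fun k hk hlt => absurd hlt (h1' k hk))⟩
    · exact ⟨g'.2 - 1, key _ (fun k hk hlt => absurd hlt (h1 k hk))
        (fun k hk hlt => lt_of_lt_of_le (by simp) (hle g' hg' k hk (h2' k hk hlt)))⟩
    · exact ⟨0, key _ (fun k hk hlt => absurd hlt (h1 k hk))
        (fun k hk hlt => absurd hlt (h1' k hk))⟩
  · push Not at ho
    obtain ⟨g, hg, rfl⟩ := ho
    exact ⟨g.2, hm.rel hg⟩

end HasIVT


namespace HasIVT
open Polynomial

lemma closure_exists {α : Type*} [DecidableEq α] (d : α → ℕ) (op : α → α → α)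
    (hop : ∀ p q, 1 ≤ d q → d q ≤ d p → d (op p q) < d q) (Q : Finset α) :
    ∃ s : Finset α, Q ⊆ s ∧ ∀ p ∈ s, ∀ q ∈ s, 1 ≤ d q → d q ≤ d p → op p q ∈ s := by
  have main : ∀ (n : ℕ) (S U : Finset α), (∀ u ∈ U, d u < n) →
      (∀ p ∈ S, ∀ q ∈ S, 1 ≤ d q → d q ≤ d p → op p q ∈ S ∪ U) →
      ∃ s : Finset α, S ∪ U ⊆ s ∧ ∀ p ∈ s, ∀ q ∈ s, 1 ≤ d q → d q ≤ d p → op p q ∈ s := by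
    intro n
    induction n with
    | zero =>
      intro S U hU hS
      have : U = ∅ := Finset.eq_empty_of_forall_notMem (fun u hu => by simpa using hU u hu)
      subst this
      exact ⟨S, by simp, by simpa using hS⟩
    | succ n ih =>
      intro S U hU hS
      set S2 := S ∪ U.filter (fun u => d u = n) with hS2
      set V := (U ∪ (S2 ×ˢ S2).image (fun pq => op pq.1 pq.2)).filter (fun u => d u < n) with hV
      have hUsub : ∀ u ∈ U, u ∈ S2 ∪ V := by
        intro u hu
        have := hU u hu
        rcases Nat.lt_or_ge (d u) n with h | h
        · simp [hV, hu, h]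
        · have : d u = n := by omega
          simp [hS2, hu, this]
      obtain ⟨s, hs1, hs2⟩ := ih S2 V (by intro u hu; rw [hV, Finset.mem_filter] at hu; exact hu.2) (by
        intro p hp q hq h1 h2
        have hlt := hop p q h1 h2
        by_cases hd : d (op p q) < n
        · apply Finset.mem_union_right
          rw [hV, Finset.mem_filter]
          refine ⟨Finset.mem_union_right _ ?_, hd⟩
          exact Finset.mem_image.2 ⟨(p, q), by simp [hp, hq], rfl⟩
        · rw [hS2, Finset.mem_union, Finset.mem_filter] at hp hq
          rcases hp with hp | hp
          · rcases hq with hq | hq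
            · have := hS p hp q hq h1 h2
              rcases Finset.mem_union.1 this with h | h
              · simp [hS2, h]
              · exact hUsub _ h
            · omega
          · omega)
      refine ⟨s, ?_, hs2⟩
      intro u hu
      apply hs1
      rcases Finset.mem_union.1 hu with h | h
      · simp [hS2, h]
      · exact hUsub u h
  obtain ⟨s, h1, h2⟩ := main (Q.sup d + 1) ∅ Q
    (fun u hu => Nat.lt_succ_of_le (Finset.le_sup (f := d) hu)) (by simp)
  exact ⟨s, by simpa using h1, h2⟩

variable {B R S : Type*} [CommRing B] [Field R] [LinearOrder R] [IsStrictOrderedRing R]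
  [Field S] [LinearOrder S] [IsStrictOrderedRing S]

lemma prem (φ : B →+* R) (q : B[X]) (hq : 1 ≤ (q.map φ).natDegree) (p : B[X]) :
    ∃ (c : B) (u r : B[X]), C c * p = u * q + r ∧ 0 < φ c ∧
      (r.map φ).natDegree < (q.map φ).natDegree := by
  induction hn : (p.map φ).natDegree using Nat.strong_induction_on generalizing p with
  | _ n ih =>
    set k := (q.map φ).natDegree with hk
    rcases Nat.lt_or_ge n k with hlt | hge
    · exact ⟨1, 0, p, by simp, by simp, by omega⟩
    · set a := q.coeff k with ha
      set b := p.coeff n with hb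
      have ha0 : φ a ≠ 0 := by
        have : (q.map φ).leadingCoeff ≠ 0 := by
          rw [leadingCoeff_ne_zero]; intro h; rw [h] at hk; simp at hk; omega
        rwa [leadingCoeff, ← hk, coeff_map] at this
      set p' := C (a^2) * p - C (a*b) * X^(n-k) * q with hp'
      have hdeg : (p'.map φ).natDegree ≤ n := by
        rw [hp']
        simp only [Polynomial.map_sub, Polynomial.map_mul, Polynomial.map_pow, map_C, map_X]
        refine (natDegree_sub_le _ _).trans (max_le ?_ ?_)
        · exact (natDegree_C_mul_le _ _).trans hn.le
        · rw [mul_assoc]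
          refine (natDegree_C_mul_le _ _).trans (natDegree_mul_le.trans ?_)
          rw [natDegree_X_pow]; omega
      have hco : (p'.map φ).coeff n = 0 := by
        rw [coeff_map, hp']
        have : (X^(n-k) * q).coeff n = q.coeff k := by
          conv_lhs => rw [show n = k + (n-k) by omega]
          rw [show k + (n-k) - k = n-k by omega, coeff_X_pow_mul]
        rw [coeff_sub, coeff_C_mul, mul_assoc, coeff_C_mul, this, ← ha, ← hb]
        rw [show a^2*b - a*b*a = 0 by ring, map_zero]
      have hlt : (p'.map φ).natDegree < n := by
        refine lt_of_le_of_ne hdeg (fun he => ?_)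
        have h1 : (p'.map φ).leadingCoeff = 0 := by rw [leadingCoeff, he, hco]
        rw [leadingCoeff_eq_zero] at h1
        rw [h1] at he; simp at he; omega
      obtain ⟨c, u, r, h1, h2, h3⟩ := ih _ hlt p' rfl
      refine ⟨c * a^2, u + C (c*a*b) * X^(n-k), r, ?_, ?_, h3⟩
      · rw [hp'] at h1
        simp only [C_mul, C_pow] at h1 ⊢
        linear_combination h1
      · rw [map_mul, map_pow]
        have := sq_pos_of_ne_zero ha0
        positivity

lemma natDegree_map_eq (φ : B →+* R) (ψ : B →+* S) (p : B[X])
    (h : ∀ i, SameSign (φ (p.coeff i)) (ψ (p.coeff i))) :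
    (p.map φ).natDegree = (p.map ψ).natDegree := by
  apply le_antisymm
  · rw [natDegree_le_iff_coeff_eq_zero]
    intro N hN
    rw [coeff_map, (h N).eq_zero, ← coeff_map]
    exact coeff_eq_zero_of_natDegree_lt hN
  · rw [natDegree_le_iff_coeff_eq_zero]
    intro N hN
    rw [coeff_map, ← (h N).eq_zero, ← coeff_map]
    exact coeff_eq_zero_of_natDegree_lt hN

theorem key (HR : HasIVT R) (HS : HasIVT S) (φ : B →+* R) (Q : Finset B[X]) :
    ∃ Cs : Finset B, ∀ ψ : B →+* S, (∀ c ∈ Cs, SameSign (φ c) (ψ c)) →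
      ∀ x : R, ∃ y : S, ∀ q ∈ Q, SameSign ((q.map φ).eval x) ((q.map ψ).eval y) := by
  classical
  set d : B[X] → ℕ := fun p => (p.map φ).natDegree with hd
  have hprem : ∀ p q : B[X], ∃ (c : B) (u r : B[X]), 1 ≤ d q → (C c * p = u * q + r ∧ 0 < φ c ∧
      d r < d q) := by
    intro p q
    by_cases hq : 1 ≤ d q
    · obtain ⟨c, u, r, h⟩ := prem φ q hq p
      exact ⟨c, u, r, fun _ => h⟩
    · exact ⟨0, 0, 0, fun h => absurd h hq⟩
  choose cc uu rr hrr using hprem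
  set op : B[X] → B[X] → B[X] := fun p q => if p = q then derivative p else rr p q with hop
  have hopd : ∀ p q, 1 ≤ d q → d q ≤ d p → d (op p q) < d q := by
    intro p q h1 h2
    by_cases h : p = q
    · subst h
      simp only [hop, if_true, hd]
      rw [← derivative_map]
      apply natDegree_derivative_lt
      simp only [hd] at h1; omega
    · simp only [hop, if_neg h]
      exact (hrr p q h1).2.2
  obtain ⟨s, hQs, hs⟩ := closure_exists d op hopd Q
  refine ⟨s.biUnion (fun p => p.coeffs) ∪ (s ×ˢ s).image (fun pq => cc pq.1 pq.2), ?_⟩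
  intro ψ hψ
  have hcoef : ∀ p ∈ s, ∀ i, SameSign (φ (p.coeff i)) (ψ (p.coeff i)) := by
    intro p hp i
    by_cases hi : p.coeff i = 0
    · rw [hi]; simp [SameSign]
    · apply hψ
      apply Finset.mem_union_left
      exact Finset.mem_biUnion.2 ⟨p, hp, coeff_mem_coeffs hi⟩
  have hcc : ∀ p ∈ s, ∀ q ∈ s, SameSign (φ (cc p q)) (ψ (cc p q)) := by
    intro p hp q hq
    apply hψ
    apply Finset.mem_union_right
    exact Finset.mem_image.2 ⟨(p, q), by simp [hp, hq], rfl⟩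
  have main : ∀ t : Finset B[X], t ⊆ s →
      (∀ p ∈ t, ∀ q ∈ t, 1 ≤ d q → d q ≤ d p → op p q ∈ t) →
      ∃ G : Set (R × S), G.Finite ∧ MonoG G ∧
        (∀ x y, Rel G x y → ∀ q ∈ t, SameSign ((q.map φ).eval x) ((q.map ψ).eval y)) ∧
        (∀ g ∈ G, ∃ q ∈ t, 1 ≤ d q ∧ (q.map φ).eval g.1 = 0) := by
    intro t
    induction t using Finset.induction_on_max_value d with
    | empty =>
      intro _ _
      exact ⟨∅, by simp, by simp [MonoG], by simp, by simp⟩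
    | insert a t hat hmax ih =>
      intro hts hcl
      have hin : ∀ p ∈ insert a t, ∀ q ∈ insert a t, 1 ≤ d q → d q ≤ d p → op p q ∈ t := by
        intro p hp q hq h1 h2
        rcases Finset.mem_insert.1 (hcl p hp q hq h1 h2) with h | h
        · exfalso
          have h3 := hopd p q h1 h2
          rw [h] at h3
          rcases Finset.mem_insert.1 hq with h4 | h4
          · rw [h4] at h3; exact lt_irrefl _ h3
          · have := hmax q h4; omega
        · exact h
      have has : a ∈ s := hts (Finset.mem_insert_self _ _)
      obtain ⟨G, hfin, hmono, hsgn, hroot⟩ := ih (fun x hx => hts (Finset.mem_insert_of_mem hx))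
        (fun p hp q hq h1 h2 => hin p (Finset.mem_insert_of_mem hp) q (Finset.mem_insert_of_mem hq)
          h1 h2)
      have hdeq := natDegree_map_eq φ ψ a (hcoef a has)
      by_cases hda : d a = 0
      · refine ⟨G, hfin, hmono, ?_, ?_⟩
        · intro x y hxy q hq
          rcases Finset.mem_insert.1 hq with rfl | hq
          · rw [eq_C_of_natDegree_eq_zero (p := q.map φ) hda,
              eq_C_of_natDegree_eq_zero (p := q.map ψ) (hdeq.symm.trans hda)]
            simpa using hcoef q has 0
          · exact hsgn x y hxy q hq
        · intro g hg
          obtain ⟨q, hq, h⟩ := hroot g hg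
          exact ⟨q, Finset.mem_insert_of_mem hq, h⟩
      · have h1a : 1 ≤ d a := by omega
        have H : Setup G (a.map φ) (a.map ψ) := by
          refine ⟨HR, HS, hfin, hmono, ?_, ?_, ?_, ?_⟩
          · intro x y hxy
            have h2 : op a a ∈ t := hin a (Finset.mem_insert_self _ _) a (Finset.mem_insert_self _ _)
              h1a le_rfl
            simp only [hop, if_true] at h2
            rw [derivative_map, derivative_map]
            exact hsgn x y hxy _ h2
          · intro g hg
            obtain ⟨q, hq, hq1, hq2⟩ := hroot g hg
            have hq3 : (q.map ψ).eval g.2 = 0 :=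
              ((hsgn _ _ (hmono.rel hg) q hq).eq_zero).1 hq2
            have hne : a ≠ q := by rintro rfl; exact hat hq
            have h2 : op a q ∈ t := hin a (Finset.mem_insert_self _ _) q
              (Finset.mem_insert_of_mem hq) hq1 (hmax q hq)
            simp only [hop, if_neg hne] at h2
            obtain ⟨e1, e2, e3⟩ := hrr a q hq1
            have e2' : 0 < ψ (cc a q) :=
              (hcc a has q (hts (Finset.mem_insert_of_mem hq))).1.1 e2
            have h3 := hsgn _ _ (hmono.rel hg) _ h2
            have f1 : φ (cc a q) * (a.map φ).eval g.1 = ((rr a q).map φ).eval g.1 := by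
              have := congrArg (fun p => (p.map φ).eval g.1) e1
              simpa [hq2] using this
            have f2 : ψ (cc a q) * (a.map ψ).eval g.2 = ((rr a q).map ψ).eval g.2 := by
              have := congrArg (fun p => (p.map ψ).eval g.2) e1
              simpa [hq3] using this
            rw [← f1, ← f2] at h3
            refine ⟨?_, ?_⟩
            · rw [← mul_pos_iff_of_pos_left e2, h3.1, mul_pos_iff_of_pos_left e2']
            · have := h3.2
              simpa [mul_neg_iff, e2, e2.not_gt, e2', e2'.not_gt] using this
          · exact h1a
          · rw [← hdeq]; exact h1a
        refine ⟨refineG G (a.map φ) (a.map ψ), H.fin_refine, H.mono_refine, ?_, ?_⟩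
        · intro x y hxy q hq
          rcases Finset.mem_insert.1 hq with rfl | hq
          · exact H.fwd hxy
          · exact hsgn x y (fun g hg => hxy g (Or.inl hg)) q hq
        · rintro g (hg | hg)
          · obtain ⟨q, hq, h⟩ := hroot g hg
            exact ⟨q, Finset.mem_insert_of_mem hq, h⟩
          · exact ⟨a, Finset.mem_insert_self _ _, h1a, hg.1⟩
  obtain ⟨G, hfin, hmono, hsgn, -⟩ := main s (Finset.Subset.refl _) hs
  intro x
  obtain ⟨y, hy⟩ := exists_partner hfin hmono x
  exact ⟨y, fun q hq => hsgn x y hy q (hQs hq)⟩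

lemma eval_finSucc {K : Type*} [Field K] [Algebra ℝ K] {n : ℕ} (z : Fin (n+1) → K)
    (q : MvPolynomial (Fin (n+1)) ℝ) :
    (((MvPolynomial.finSuccEquiv ℝ n q).map
      ((MvPolynomial.aeval (fun i : Fin n => z i.succ) : MvPolynomial (Fin n) ℝ →ₐ[ℝ] K) :
        MvPolynomial (Fin n) ℝ →+* K)).eval (z 0)) = MvPolynomial.aeval z q := by
  induction q using MvPolynomial.induction_on with
  | C a => simp [MvPolynomial.finSuccEquiv_apply]
  | add p q hp hq => rw [map_add, Polynomial.map_add, eval_add, hp, hq, map_add]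
  | mul_X p i hp =>
    rw [map_mul, Polynomial.map_mul, eval_mul, hp, map_mul]
    congr 1
    refine Fin.cases ?_ (fun j => ?_) i
    · simp [MvPolynomial.finSuccEquiv_X_zero]
    · simp [MvPolynomial.finSuccEquiv_X_succ]

/-- Transfer principle from a real closed extension to `ℝ`. -/
theorem transfer [Algebra ℝ R] (HR : HasIVT R) (n : ℕ) (ξ : Fin n → R)
    (Q : Finset (MvPolynomial (Fin n) ℝ)) :
    ∃ x : Fin n → ℝ, ∀ q ∈ Q, SameSign (MvPolynomial.aeval ξ q) (MvPolynomial.aeval x q) := by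
  classical
  induction n with
  | zero =>
    have hpos : ∀ c : ℝ, 0 < c → 0 < algebraMap ℝ R c := by
      intro c hc
      have h1 : algebraMap ℝ R c = (algebraMap ℝ R (Real.sqrt c))^2 := by
        rw [← map_pow, Real.sq_sqrt hc.le]
      have h2 : algebraMap ℝ R c ≠ 0 := by
        rw [Ne, map_eq_zero]; exact hc.ne'
      rw [h1] at h2 ⊢
      positivity
    have hss : ∀ c : ℝ, SameSign (algebraMap ℝ R c) c := by
      intro c
      refine (sameSign_of (hpos c) ?_ ?_).symm
      · intro hc
        have := hpos (-c) (by linarith)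
        simpa using this
      · rintro rfl; simp
    refine ⟨0, fun q _ => ?_⟩
    rw [MvPolynomial.eq_C_of_isEmpty q]
    simpa using hss _
  | succ n ih =>
    set φ : MvPolynomial (Fin n) ℝ →ₐ[ℝ] R := MvPolynomial.aeval (fun i => ξ i.succ) with hφ
    obtain ⟨Cs, hCs⟩ := key (S := ℝ) HR HasIVT.real (φ : MvPolynomial (Fin n) ℝ →+* R)
      (Q.image (MvPolynomial.finSuccEquiv ℝ n))
    obtain ⟨x, hx⟩ := ih (fun i => ξ i.succ) Cs
    obtain ⟨y, hy⟩ := hCs (MvPolynomial.aeval x : MvPolynomial (Fin n) ℝ →ₐ[ℝ] ℝ) hx (ξ 0)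
    refine ⟨Fin.cons y x, fun q hq => ?_⟩
    have := hy _ (Finset.mem_image_of_mem _ hq)
    rw [eval_finSucc, show y = (Fin.cons y x : Fin (n+1) → ℝ) 0 by simp] at this
    have e : (MvPolynomial.aeval x : MvPolynomial (Fin n) ℝ →ₐ[ℝ] ℝ) =
      MvPolynomial.aeval (fun i : Fin n => (Fin.cons y x : Fin (n+1) → ℝ) i.succ) := by simp
    rw [e, eval_finSucc] at this
    exact this

end HasIVT


namespace RealClosure
open Polynomial

section SOS
variable {E K : Type*} [Field E] [LinearOrder E] [IsStrictOrderedRing E] [Field K] [Algebra E K]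

variable (E) in
/-- Weighted sums of squares of polynomials. -/
noncomputable def Sos : AddSubmonoid E[X] := AddSubmonoid.closure {s | ∃ (c : E) (g : E[X]), 0 ≤ c ∧ s = C c * g ^ 2}

lemma Sos.gen {c : E} (hc : 0 ≤ c) (g : E[X]) : C c * g ^ 2 ∈ Sos E :=
  AddSubmonoid.subset_closure ⟨c, g, hc, rfl⟩

lemma Sos.sq (g : E[X]) : g ^ 2 ∈ Sos E := by
  simpa using Sos.gen (zero_le_one) g

lemma Sos.mul {s t : E[X]} (hs : s ∈ Sos E) (ht : t ∈ Sos E) : s * t ∈ Sos E := by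
  induction hs, ht using AddSubmonoid.closure_induction₂ with
  | mem x y hx hy =>
    obtain ⟨c, g, hc, rfl⟩ := hx
    obtain ⟨c', g', hc', rfl⟩ := hy
    have := Sos.gen (mul_nonneg hc hc') (g * g')
    rw [C_mul] at this
    convert this using 1
    ring
  | zero_left x hx => simp
  | zero_right x hx => simp
  | add_left x y z hx hy hz h1 h2 => rw [add_mul]; exact add_mem h1 h2
  | add_right x y z hx hy hz h1 h2 => rw [mul_add]; exact add_mem h1 h2

lemma Sos.eval_nonneg {s : E[X]} (hs : s ∈ Sos E) (a : E) : 0 ≤ s.eval a := by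
  induction hs using AddSubmonoid.closure_induction with
  | mem x hx =>
    obtain ⟨c, g, hc, rfl⟩ := hx
    simp only [eval_mul, eval_C, eval_pow]
    positivity
  | zero => simp
  | add x y hx hy h1 h2 => rw [eval_add]; exact add_nonneg h1 h2

lemma Sos.reduce {s : E[X]} (hs : s ∈ Sos E) (p : E[X]) (hp : p.natDegree ≠ 0) :
    ∃ s' ∈ Sos E, p ∣ s - s' ∧ s'.natDegree < 2 * p.natDegree - 1 := by
  induction hs using AddSubmonoid.closure_induction with
  | mem x hx =>
    obtain ⟨c, g, hc, rfl⟩ := hx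
    refine ⟨C c * (g % p) ^ 2, Sos.gen hc _, ?_, ?_⟩
    · have h : p ∣ g - g % p := ⟨g / p, by
        linear_combination - EuclideanDomain.div_add_mod g p⟩
      have : C c * g ^ 2 - C c * (g % p) ^ 2 = (g - g % p) * (C c * (g + g % p)) := by ring
      rw [this]
      exact Dvd.dvd.mul_right h _
    · have h1 : (g % p).natDegree < p.natDegree := natDegree_mod_lt g hp
      refine lt_of_le_of_lt ((natDegree_C_mul_le _ _).trans natDegree_pow_le) ?_
      omega
  | zero => exact ⟨0, zero_mem _, by simp, by simp; omega⟩
  | add x y hx hy h1 h2 =>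
    obtain ⟨s, hs, hs1, hs2⟩ := h1
    obtain ⟨t, ht, ht1, ht2⟩ := h2
    refine ⟨s + t, add_mem hs ht, ?_, ?_⟩
    · rw [show x + y - (s + t) = (x - s) + (y - t) by ring]
      exact dvd_add hs1 ht1
    · exact lt_of_le_of_lt (natDegree_add_le _ _) (max_lt hs2 ht2)

lemma factor_sign (a b : E) (f : E[X]) (h : f.eval a * f.eval b < 0) :
    ∃ q : E[X], Irreducible q ∧ q ∣ f ∧ q.eval a * q.eval b < 0 := by
  induction f using WfDvdMonoid.induction_on_irreducible with
  | zero => simp at h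
  | unit u hu =>
    obtain ⟨c, hc, rfl⟩ := Polynomial.isUnit_iff.1 hu
    simp at h
    exact absurd h (not_lt.2 (mul_self_nonneg c))
  | mul g q hg hq ih =>
    by_cases hs : q.eval a * q.eval b < 0
    · exact ⟨q, hq, dvd_mul_right _ _, hs⟩
    · have h2 : g.eval a * g.eval b < 0 := by
        by_contra hcon
        have := mul_nonneg (not_lt.1 hs) (not_lt.1 hcon)
        simp only [eval_mul] at h
        nlinarith
      obtain ⟨r, h3, h4, h5⟩ := ih h2
      exact ⟨r, h3, h4.mul_left _, h5⟩

variable [IsAlgClosed K]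

lemma no_neg_one (a b : E) (p : E[X]) (hp : Irreducible p) (hs : p.eval a * p.eval b < 0)
    (α : K) (hα : aeval α p = 0) (s : E[X]) (hsos : s ∈ Sos E) : 1 + aeval α s ≠ 0 := by
  induction hn : p.natDegree using Nat.strong_induction_on generalizing p α s with
  | _ n ih =>
    intro h0
    have hdeg : p.natDegree ≠ 0 := (Irreducible.natDegree_pos hp).ne'
    obtain ⟨s', hs', h1, h2⟩ := Sos.reduce hsos p hdeg
    have h3 : aeval α (1 + s') = 0 := by
      obtain ⟨u, hu⟩ := h1
      have := congrArg (aeval α) hu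
      rw [map_mul, hα, zero_mul, map_sub, sub_eq_zero] at this
      rw [map_add, map_one, ← this]; exact h0
    have h4 : p ∣ 1 + s' := by
      by_contra hcon
      obtain ⟨u, v, huv⟩ := (hp.coprime_iff_not_dvd).2 hcon
      have := congrArg (aeval α) huv
      rw [map_add, map_mul, map_mul, hα, h3, map_one, mul_zero, mul_zero, add_zero] at this
      exact zero_ne_one this
    obtain ⟨h, hh⟩ := h4
    have ea := congrArg (eval a) hh
    have eb := congrArg (eval b) hh
    have pa := Sos.eval_nonneg hs' a
    have pb := Sos.eval_nonneg hs' b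
    simp only [eval_add, eval_one, eval_mul] at ea eb
    have hsh : h.eval a * h.eval b < 0 := by
      by_contra hcon
      have h5 : 0 < (p.eval a * h.eval a) * (p.eval b * h.eval b) := by
        rw [← ea, ← eb]; positivity
      nlinarith [mul_nonneg (not_lt.1 hcon) (neg_pos.2 hs).le]
    have hh0 : h ≠ 0 := by rintro rfl; simp at hsh
    obtain ⟨q, hq1, hq2, hq3⟩ := factor_sign a b h hsh
    have hdl : h.natDegree < n := by
      have e1 : (p * h).natDegree = p.natDegree + h.natDegree := natDegree_mul hp.ne_zero hh0
      rw [← hh] at e1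
      have e2 : (1 + s').natDegree < 2 * p.natDegree - 1 :=
        lt_of_le_of_lt (natDegree_add_le _ _) (max_lt (by simp; omega) h2)
      omega
    have hql : q.natDegree < n := lt_of_le_of_lt (natDegree_le_of_dvd hq2 hh0) hdl
    obtain ⟨β, hβ⟩ := IsAlgClosed.exists_aeval_eq_zero K q
      (by have := Irreducible.degree_pos hq1; exact this.ne')
    refine ih _ hql q hq1 hq3 β hβ s' hs' rfl ?_
    have h6 : aeval β h = 0 := by
      obtain ⟨u, rfl⟩ := hq2
      rw [map_mul, hβ, zero_mul]
    have := congrArg (aeval β) hh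
    simpa [h6] using this

end SOS

section Cone
variable {K : Type*} [Field K]

structure IsCone (P : Set K) : Prop where
  zero : (0:K) ∈ P
  one : (1:K) ∈ P
  add : ∀ {a b}, a ∈ P → b ∈ P → a + b ∈ P
  mul : ∀ {a b}, a ∈ P → b ∈ P → a * b ∈ P
  sq : ∀ {a b}, a ∈ P → b ∈ P → (a - b) ^ 2 ∈ P
  proper : ∀ {a}, a ∈ P → -a ∈ P → a = 0

lemma exists_maximal (P₀ : Set K) (h : IsCone P₀) : ∃ P, P₀ ⊆ P ∧ Maximal IsCone P := by
  refine zorn_subset_nonempty {P | IsCone P} ?_ P₀ h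
  intro c hc hchain hne
  have two : ∀ {a b}, a ∈ ⋃₀ c → b ∈ ⋃₀ c → ∃ P ∈ c, a ∈ P ∧ b ∈ P := by
    rintro a b ⟨P, hP, ha⟩ ⟨Q, hQ, hb⟩
    rcases hchain.total hP hQ with h | h
    · exact ⟨Q, hQ, h ha, hb⟩
    · exact ⟨P, hP, ha, h hb⟩
  obtain ⟨P1, hP1⟩ := hne
  refine ⟨⋃₀ c, ?_, fun s hs => Set.subset_sUnion_of_mem hs⟩
  constructor
  · exact ⟨P1, hP1, (hc hP1).zero⟩
  · exact ⟨P1, hP1, (hc hP1).one⟩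
  · intro a b ha hb
    obtain ⟨P, hP, h1, h2⟩ := two ha hb
    exact ⟨P, hP, (hc hP).add h1 h2⟩
  · intro a b ha hb
    obtain ⟨P, hP, h1, h2⟩ := two ha hb
    exact ⟨P, hP, (hc hP).mul h1 h2⟩
  · intro a b ha hb
    obtain ⟨P, hP, h1, h2⟩ := two ha hb
    exact ⟨P, hP, (hc hP).sq h1 h2⟩
  · intro a ha hb
    obtain ⟨P, hP, h1, h2⟩ := two ha hb
    exact (hc hP).proper h1 h2

/-- differences -/
def Diff (P : Set K) : Set K := {x | ∃ p ∈ P, ∃ q ∈ P, x = p - q}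

variable {P : Set K}

lemma IsCone.sub_diff (h : IsCone P) {x : K} (hx : x ∈ P) : x ∈ Diff P := ⟨x, hx, 0, h.zero, by simp⟩

lemma IsCone.diff_sq (h : IsCone P) {x : K} (hx : x ∈ Diff P) : x ^ 2 ∈ P := by
  obtain ⟨p, hp, q, hq, rfl⟩ := hx
  exact h.sq hp hq

lemma IsCone.diff_mul (h : IsCone P) {x y : K} (hx : x ∈ Diff P) (hy : y ∈ Diff P) :
    x * y ∈ Diff P := by
  obtain ⟨p, hp, q, hq, rfl⟩ := hx
  obtain ⟨p', hp', q', hq', rfl⟩ := hy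
  exact ⟨p * p' + q * q', h.add (h.mul hp hp') (h.mul hq hq'), p * q' + q * p',
    h.add (h.mul hp hq') (h.mul hq hp'), by ring⟩

lemma IsCone.diff_add (h : IsCone P) {x y : K} (hx : x ∈ Diff P) (hy : y ∈ Diff P) :
    x + y ∈ Diff P := by
  obtain ⟨p, hp, q, hq, rfl⟩ := hx
  obtain ⟨p', hp', q', hq', rfl⟩ := hy
  exact ⟨p + p', h.add hp hp', q + q', h.add hq hq', by ring⟩

lemma IsCone.diff_neg {x : K} (hx : x ∈ Diff P) : -x ∈ Diff P := by
  obtain ⟨p, hp, q, hq, rfl⟩ := hx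
  exact ⟨q, hq, p, hp, by ring⟩

lemma div_mem (hP : Maximal IsCone P) {p s : K} (hp : p ∈ P) (hs : s ∈ Diff P) (hs0 : s ≠ 0) :
    p / s ^ 2 ∈ P := by
  have h := hP.prop
  set P' : Set K := {x | ∃ p ∈ P, ∃ s ∈ Diff P, s ≠ 0 ∧ x * s ^ 2 = p} with hP'
  have hsub : P ⊆ P' := fun x hx => ⟨x, hx, 1, h.sub_diff h.one, one_ne_zero, by simp⟩
  have hcone : IsCone P' := by
    constructor
    · exact hsub h.zero
    · exact hsub h.one
    · rintro x y ⟨p, hp, s, hs, hs0, rfl⟩ ⟨q, hq, t, ht, ht0, rfl⟩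
      exact ⟨_, h.add (h.mul hp (h.diff_sq ht)) (h.mul hq (h.diff_sq hs)), s * t, h.diff_mul hs ht,
        mul_ne_zero hs0 ht0, by ring⟩
    · rintro x y ⟨p, hp, s, hs, hs0, rfl⟩ ⟨q, hq, t, ht, ht0, rfl⟩
      exact ⟨_, h.mul hp hq, s * t, h.diff_mul hs ht, mul_ne_zero hs0 ht0, by ring⟩
    · rintro x y ⟨p, hp, s, hs, hs0, rfl⟩ ⟨q, hq, t, ht, ht0, rfl⟩
      refine ⟨_, h.sq (h.mul hp (h.diff_sq ht)) (h.mul hq (h.diff_sq hs)), (s * t) ^ 2,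
        h.sub_diff (h.diff_sq (h.diff_mul hs ht)), pow_ne_zero _ (mul_ne_zero hs0 ht0), by ring⟩
    · rintro x ⟨p, hp, s, hs, hs0, rfl⟩ ⟨q, hq, t, ht, ht0, hqt⟩
      have h1 : x * s ^ 2 * t ^ 2 = 0 := by
        apply h.proper (h.mul hp (h.diff_sq ht))
        have := h.mul hq (h.diff_sq hs)
        rw [← hqt] at this
        convert this using 1
        ring
      simpa [hs0, ht0] using h1
  have heq : P' ⊆ P := hP.le_of_ge hcone hsub
  apply heq
  exact ⟨p, hp, s, hs, hs0, div_mul_cancel₀ _ (pow_ne_zero _ hs0)⟩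

lemma total (hP : Maximal IsCone P) {a : K} (ha : a ∈ Diff P) : a ∈ P ∨ -a ∈ P := by
  have h := hP.prop
  by_cases haP : a ∈ P
  · exact Or.inl haP
  right
  set P' : Set K := {x | ∃ p ∈ P, ∃ q ∈ P, x = p - a * q} with hP'
  have hsub : P ⊆ P' := fun x hx => ⟨x, hx, 0, h.zero, by simp⟩
  have hd : P' ⊆ Diff P := by
    rintro x ⟨p, hp, q, hq, rfl⟩
    rw [sub_eq_add_neg]
    exact h.diff_add (h.sub_diff hp) (IsCone.diff_neg (h.diff_mul ha (h.sub_diff hq)))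
  have hcone : IsCone P' := by
    constructor
    · exact hsub h.zero
    · exact hsub h.one
    · rintro x y ⟨p, hp, q, hq, rfl⟩ ⟨p', hp', q', hq', rfl⟩
      exact ⟨_, h.add hp hp', _, h.add hq hq', by ring⟩
    · rintro x y ⟨p, hp, q, hq, rfl⟩ ⟨p', hp', q', hq', rfl⟩
      exact ⟨_, h.add (h.mul hp hp') (h.mul (h.diff_sq ha) (h.mul hq hq')), _,
        h.add (h.mul hp hq') (h.mul hq hp'), by ring⟩
    · intro x y hx hy
      apply hsub
      apply h.diff_sq
      rw [sub_eq_add_neg]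
      exact h.diff_add (hd hx) (IsCone.diff_neg (hd hy))
    · rintro x ⟨p, hp, q, hq, rfl⟩ ⟨p', hp', q', hq', he⟩
      have e : p + p' = a * (q + q') := by linear_combination -he
      by_cases hv : q + q' = 0
      · have hq0 : q = 0 := h.proper hq (by rwa [← eq_neg_of_add_eq_zero_right hv])
        rw [hv, mul_zero] at e
        have hp0 : p = 0 := h.proper hp (by rwa [← eq_neg_of_add_eq_zero_right e])
        simp [hp0, hq0]
      · exfalso
        apply haP
        have := div_mem hP (h.mul (h.add hp hp') (h.add hq hq')) (h.sub_diff (h.add hq hq')) hv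
        rw [e] at this
        convert this using 1
        field_simp
  have heq : P' ⊆ P := hP.le_of_ge hcone hsub
  exact heq ⟨0, h.zero, 1, h.one, by simp⟩

/-- The subfield of differences. -/
def diffField (hP : Maximal IsCone P) : Subfield K where
  carrier := Diff P
  zero_mem' := hP.prop.sub_diff hP.prop.zero
  one_mem' := hP.prop.sub_diff hP.prop.one
  add_mem' := hP.prop.diff_add
  mul_mem' := hP.prop.diff_mul
  neg_mem' := IsCone.diff_neg
  inv_mem' := by
    intro x hx
    by_cases h0 : x = 0
    · simpa [h0] using hP.prop.sub_diff hP.prop.zero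
    · obtain ⟨p, hp, q, hq, e⟩ := id hx
      refine ⟨_, div_mem hP hp hx h0, _, div_mem hP hq hx h0, ?_⟩
      rw [← sub_div, ← e]
      field_simp

noncomputable def diffCone (hP : Maximal IsCone P) : RingCone (diffField hP) where
  carrier := {x | (x : K) ∈ P}
  zero_mem' := hP.prop.zero
  one_mem' := hP.prop.one
  add_mem' := hP.prop.add
  mul_mem' := hP.prop.mul
  eq_zero_of_mem_of_neg_mem' := fun {a} h1 h2 => Subtype.ext (hP.prop.proper h1 h2)

end Cone

theorem exists_ivt {K : Type*} [Field K] [CharZero K] [IsAlgClosed K] (P₀ : Set K) (h₀ : IsCone P₀) :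
    ∃ (E : Subfield K) (_ : LinearOrder E) (_ : IsStrictOrderedRing E), HasIVT E ∧
      ∀ x ∈ P₀, ∃ h : x ∈ E, 0 ≤ (⟨x, h⟩ : E) := by
  classical
  obtain ⟨P, hsub, hP⟩ := exists_maximal P₀ h₀
  have h := hP.prop
  set E := diffField hP with hE
  haveI : HasMemOrNegMem (diffCone hP) := ⟨fun a => total hP a.2⟩
  letI : LinearOrder E := LinearOrder.mkOfAddGroupCone (diffCone hP)
  haveI : IsOrderedRing E := IsOrderedRing.mkOfCone (diffCone hP)
  haveI : IsStrictOrderedRing E := IsOrderedRing.toIsStrictOrderedRing E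
  have hnn : ∀ x : E, 0 ≤ x ↔ (x : K) ∈ P := by
    intro x
    change ((x - 0 : E) : K) ∈ P ↔ _
    simp
  refine ⟨E, inferInstance, inferInstance, ?_, ?_⟩
  · intro f a b hab hf
    obtain ⟨q, hq1, hq2, hq3⟩ := factor_sign a b f hf
    obtain ⟨α, hα⟩ := IsAlgClosed.exists_aeval_eq_zero K q
      (by have := Irreducible.degree_pos hq1; exact this.ne')
    set P' : Set K := {x | ∃ s ∈ Sos E, x = aeval α s} with hP'
    have hsub' : P ⊆ P' := by
      intro x hx
      refine ⟨C ⟨x, h.sub_diff hx⟩, ?_, ?_⟩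
      · simpa using Sos.gen ((hnn ⟨x, h.sub_diff hx⟩).2 hx) 1
      · simp; rfl
    have hcone : IsCone P' := by
      constructor
      · exact hsub' h.zero
      · exact hsub' h.one
      · rintro x y ⟨s, hs, rfl⟩ ⟨t, ht, rfl⟩
        exact ⟨s + t, add_mem hs ht, by simp⟩
      · rintro x y ⟨s, hs, rfl⟩ ⟨t, ht, rfl⟩
        exact ⟨s * t, Sos.mul hs ht, by simp⟩
      · rintro x y ⟨s, hs, rfl⟩ ⟨t, ht, rfl⟩
        exact ⟨(s - t)^2, Sos.sq _, by simp⟩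
      · rintro x ⟨s, hs, rfl⟩ ⟨t, ht, hst⟩
        by_contra hne
        have hnd : ¬ q ∣ s := by
          rintro ⟨u, rfl⟩
          apply hne; rw [map_mul, hα, zero_mul]
        obtain ⟨u, v, huv⟩ := (hq1.coprime_iff_not_dvd).2 hnd
        have h1 := congrArg (aeval α) huv
        simp only [map_add, map_mul, hα, map_one, mul_zero, zero_add] at h1
        refine no_neg_one a b q hq1 hq3 α hα (t * s * v ^ 2) (Sos.mul (Sos.mul ht hs) (Sos.sq v)) ?_
        simp only [map_mul, map_pow, ← hst]
        linear_combination -(1 + aeval α v * aeval α s) * h1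
    have heq : P' ⊆ P := hP.le_of_ge hcone hsub'
    have hαE : α ∈ E := by
      have hhalf : algebraMap E K (1/2) = 1/2 := by rw [map_div₀, map_one, map_ofNat]
      refine ⟨((α + 1)/2)^2, heq ⟨(C (1/2) * (X + 1))^2, Sos.sq _, ?_⟩, ((α - 1)/2)^2,
        heq ⟨(C (1/2) * (X - 1))^2, Sos.sq _, ?_⟩, by ring⟩
      · simp only [map_pow, map_mul, map_add, map_one, aeval_C, aeval_X, hhalf]; ring
      · simp only [map_pow, map_mul, map_sub, map_one, aeval_C, aeval_X, hhalf]; ring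
    have hroot : q.eval ⟨α, hαE⟩ = 0 := by
      have : aeval (algebraMap E K ⟨α, hαE⟩) q = 0 := hα
      rw [aeval_algebraMap_apply] at this
      simpa using this
    set r : E := ⟨α, hαE⟩
    have hd := degree_eq_one_of_irreducible_of_root hq1 hroot
    obtain ⟨g, hg⟩ := dvd_iff_isRoot.2 hroot
    have hgc : g.natDegree = 0 := by
      have h1 : q.natDegree = 1 := natDegree_eq_of_degree_eq_some (by rw [hd]; rfl)
      have hg0 : g ≠ 0 := by rintro rfl; rw [hg] at hq3; simp at hq3
      rw [hg, natDegree_mul (X_sub_C_ne_zero r) hg0, natDegree_X_sub_C] at h1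
      omega
    rw [eq_C_of_natDegree_eq_zero hgc] at hg
    set c := g.coeff 0
    have h3 : ((a - r) * (b - r)) * (c * c) < 0 := by
      rw [hg] at hq3
      simp at hq3
      linarith
    have h4 : (a - r) * (b - r) < 0 := by
      by_contra hcon
      have := mul_nonneg (not_lt.1 hcon) (mul_self_nonneg c)
      linarith
    have hfr : f.eval r = 0 := by
      obtain ⟨u, rfl⟩ := hq2
      simp [hroot]
    rcases mul_neg_iff.1 h4 with ⟨h5, h6⟩ | ⟨h5, h6⟩
    · exfalso; linarith
    · exact ⟨r, by linarith, by linarith, hfr⟩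
  · intro x hx
    exact ⟨h.sub_diff (hsub hx), (hnn _).2 (hsub hx)⟩

end RealClosure


namespace FibreThm
universe u
section Stengle
variable {A : Type u} [CommRing A]

structure IsPre (P : Set A) : Prop where
  sq : ∀ a, a ^ 2 ∈ P
  add : ∀ {a b}, a ∈ P → b ∈ P → a + b ∈ P
  mul : ∀ {a b}, a ∈ P → b ∈ P → a * b ∈ P
  proper : (-1 : A) ∉ P

lemma IsPre.zero {P : Set A} (h : IsPre P) : (0:A) ∈ P := by simpa using h.sq 0
lemma IsPre.one {P : Set A} (h : IsPre P) : (1:A) ∈ P := by simpa using h.sq 1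

lemma exists_maxPre (P₀ : Set A) (h : IsPre P₀) : ∃ P, P₀ ⊆ P ∧ Maximal IsPre P := by
  refine zorn_subset_nonempty {P | IsPre P} ?_ P₀ h
  intro c hc hchain hne
  have two : ∀ {a b}, a ∈ ⋃₀ c → b ∈ ⋃₀ c → ∃ P ∈ c, a ∈ P ∧ b ∈ P := by
    rintro a b ⟨P, hP, ha⟩ ⟨Q, hQ, hb⟩
    rcases hchain.total hP hQ with h | h
    · exact ⟨Q, hQ, h ha, hb⟩
    · exact ⟨P, hP, ha, h hb⟩
  obtain ⟨P1, hP1⟩ := hne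
  refine ⟨⋃₀ c, ?_, fun s hs => Set.subset_sUnion_of_mem hs⟩
  constructor
  · exact fun a => ⟨P1, hP1, (hc hP1).sq a⟩
  · intro a b ha hb
    obtain ⟨P, hP, h1, h2⟩ := two ha hb
    exact ⟨P, hP, (hc hP).add h1 h2⟩
  · intro a b ha hb
    obtain ⟨P, hP, h1, h2⟩ := two ha hb
    exact ⟨P, hP, (hc hP).mul h1 h2⟩
  · rintro ⟨P, hP, h1⟩
    exact (hc hP).proper h1

variable {P : Set A}

lemma maxPre_notMem (hP : Maximal IsPre P) {a : A} (ha : a ∉ P) :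
    ∃ p ∈ P, ∃ q ∈ P, -1 = p + a * q := by
  have h := hP.prop
  by_contra hcon
  set P' : Set A := {x | ∃ p ∈ P, ∃ q ∈ P, x = p + a * q} with hP'
  have hsub : P ⊆ P' := fun x hx => ⟨x, hx, 0, h.zero, by simp⟩
  have hc : IsPre P' := by
    constructor
    · exact fun a => hsub (h.sq a)
    · rintro x y ⟨p, hp, q, hq, rfl⟩ ⟨p', hp', q', hq', rfl⟩
      exact ⟨_, h.add hp hp', _, h.add hq hq', by ring⟩
    · rintro x y ⟨p, hp, q, hq, rfl⟩ ⟨p', hp', q', hq', rfl⟩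
      exact ⟨_, h.add (h.mul hp hp') (h.mul (h.sq a) (h.mul hq hq')), _,
        h.add (h.mul hp hq') (h.mul hq hp'), by ring⟩
    · exact hcon
  exact ha (hP.le_of_ge hc hsub ⟨0, h.zero, 1, h.one, by simp⟩)

lemma maxPre_prime (hP : Maximal IsPre P) {a b : A} (ha : a ∉ P) (hb : b ∉ P)
    (hab : -(a * b) ∈ P) : False := by
  have h := hP.prop
  obtain ⟨p, hp, q, hq, e⟩ := maxPre_notMem hP ha
  obtain ⟨p', hp', q', hq', e'⟩ := maxPre_notMem hP hb
  apply h.proper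
  have : (-1 : A) = p + p' + p * p' + -(a * b) * (q * q') := by
    linear_combination (1 + p') * e - (a * q) * e'
  rw [this]
  exact h.add (h.add (h.add hp hp') (h.mul hp hp')) (h.mul hab (h.mul hq hq'))

lemma maxPre_total (hP : Maximal IsPre P) (a : A) : a ∈ P ∨ -a ∈ P := by
  by_contra hcon
  rw [not_or] at hcon
  refine maxPre_prime hP hcon.1 hcon.2 ?_
  have := hP.prop.sq a
  convert this using 1
  ring

def supp (hP : Maximal IsPre P) : Ideal A where
  carrier := {a | a ∈ P ∧ -a ∈ P}
  zero_mem' := ⟨hP.prop.zero, by simpa using hP.prop.zero⟩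
  add_mem' := by
    rintro a b ⟨h1, h2⟩ ⟨h3, h4⟩
    exact ⟨hP.prop.add h1 h3, by rw [neg_add]; exact hP.prop.add h2 h4⟩
  smul_mem' := by
    rintro c x ⟨h1, h2⟩
    have h := hP.prop
    rcases maxPre_total hP c with hc | hc
    · exact ⟨h.mul hc h1, by have := h.mul hc h2; rwa [mul_neg] at this⟩
    · refine ⟨by have := h.mul hc h2; rwa [neg_mul_neg] at this,
        by have := h.mul hc h1; rwa [neg_mul] at this⟩

lemma mem_supp (hP : Maximal IsPre P) {a : A} : a ∈ supp hP ↔ a ∈ P ∧ -a ∈ P := Iff.rfl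

lemma supp_prime (hP : Maximal IsPre P) : (supp hP).IsPrime := by
  constructor
  · intro h
    have : (1 : A) ∈ supp hP := by rw [h]; trivial
    exact hP.prop.proper this.2
  · intro a b hab
    by_contra hcon
    rw [not_or, mem_supp, mem_supp, not_and_or, not_and_or] at hcon
    obtain ⟨h1, h2⟩ := hab
    obtain ⟨h3 | h3, h4 | h4⟩ := hcon
    · exact maxPre_prime hP h3 h4 h2
    · exact maxPre_prime hP h3 h4 (by simpa using h1)
    · exact maxPre_prime hP h3 h4 (by simpa using h1)
    · exact maxPre_prime hP h3 h4 (by simpa using h2)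

lemma nonneg_of_gens [Algebra ℝ A] {S : Set A} {χ : A →ₐ[ℝ] ℝ} (h : ∀ s ∈ S, 0 ≤ χ s) :
    χ ∈ KSet S := by
  intro a ha
  induction ha with
  | sq a => rw [map_pow]; positivity
  | gen ha => exact h _ ha
  | add _ _ h1 h2 => rw [map_add]; exact add_nonneg h1 h2
  | mul _ _ h1 h2 => rw [map_mul]; exact mul_nonneg h1 h2

theorem exists_ordered_hom [Algebra ℝ A] (hP : Maximal IsPre P) :
    ∃ (E : Type u) (_ : Field E) (_ : LinearOrder E) (_ : IsStrictOrderedRing E) (ψ : A →+* E),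
      HasIVT E ∧ ∀ a ∈ P, 0 ≤ ψ a := by
  have h := hP.prop
  haveI := supp_prime hP
  let K := AlgebraicClosure (FractionRing (A ⧸ supp hP))
  let φ : A →+* K := (algebraMap (FractionRing (A ⧸ supp hP)) K).comp
    ((algebraMap (A ⧸ supp hP) (FractionRing (A ⧸ supp hP))).comp (Ideal.Quotient.mk (supp hP)))
  have hφ : ∀ a, φ a = 0 ↔ a ∈ supp hP := by
    intro a
    simp only [φ, RingHom.comp_apply, map_eq_zero]
    rw [map_eq_zero_iff _ (IsFractionRing.injective (A ⧸ supp hP) _), Ideal.Quotient.eq_zero_iff_mem]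
  haveI : CharZero K := by
    letI : Algebra ℝ K := (φ.comp (algebraMap ℝ A)).toAlgebra
    exact charZero_of_injective_algebraMap (algebraMap ℝ K).injective
  let P₀ : Set K := {x | ∃ a ∈ P, ∃ s, s ∉ supp hP ∧ x * φ s ^ 2 = φ a}
  have h1s : (1:A) ∉ supp hP := fun h1 => h.proper h1.2
  have hin : ∀ a ∈ P, φ a ∈ P₀ := fun a ha => ⟨a, ha, 1, h1s, by simp⟩
  have hcone : RealClosure.IsCone P₀ := by
    have hmul : ∀ {s t}, s ∉ supp hP → t ∉ supp hP → s * t ∉ supp hP := by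
      intro s t hs ht hst
      exact (supp_prime hP).mem_or_mem hst |>.elim hs ht
    constructor
    · simpa using hin 0 h.zero
    · simpa using hin 1 h.one
    · rintro x y ⟨a, ha, s, hs, e⟩ ⟨b, hb, t, ht, e'⟩
      refine ⟨a * t ^ 2 + b * s ^ 2, h.add (h.mul ha (h.sq t)) (h.mul hb (h.sq s)), s * t,
        hmul hs ht, ?_⟩
      simp only [map_mul, map_add, map_pow]
      linear_combination φ t ^ 2 * e + φ s ^ 2 * e'
    · rintro x y ⟨a, ha, s, hs, e⟩ ⟨b, hb, t, ht, e'⟩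
      refine ⟨a * b, h.mul ha hb, s * t, hmul hs ht, ?_⟩
      simp only [map_mul, ← e, ← e']
      ring
    · rintro x y ⟨a, ha, s, hs, e⟩ ⟨b, hb, t, ht, e'⟩
      refine ⟨(a * t ^ 2 - b * s ^ 2) ^ 2, h.sq _, (s * t) * (s * t),
        hmul (hmul hs ht) (hmul hs ht), ?_⟩
      simp only [map_mul, map_sub, map_pow, ← e, ← e']
      ring
    · rintro x ⟨a, ha, s, hs, e⟩ ⟨b, hb, t, ht, e'⟩
      have hs0 : φ s ≠ 0 := fun h0 => hs ((hφ s).1 h0)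
      have ht0 : φ t ≠ 0 := fun h0 => ht ((hφ t).1 h0)
      have h0 : φ (a * t ^ 2 + b * s ^ 2) = 0 := by
        simp only [map_mul, map_add, map_pow]
        linear_combination - φ t ^ 2 * e - φ s ^ 2 * e'
      rw [hφ, mem_supp] at h0
      have h2 : φ (a * t ^ 2) = 0 := by
        rw [hφ]
        refine ⟨h.mul ha (h.sq t), ?_⟩
        have := h.add h0.2 (h.mul hb (h.sq s))
        convert this using 1
        ring
      rw [map_mul, ← e, map_pow] at h2
      simpa [hs0, ht0] using h2
  obtain ⟨E, lo, so, hivt, hE⟩ := RealClosure.exists_ivt P₀ hcone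
  have hmem : ∀ a, φ a ∈ E := by
    intro a
    rcases maxPre_total hP a with ha | ha
    · exact (hE _ (hin a ha)).1
    · have := (hE _ (hin _ ha)).1
      rw [map_neg] at this
      exact neg_mem_iff.1 this
  refine ⟨E, inferInstance, lo, so, φ.codRestrict E hmem, hivt, ?_⟩
  intro a ha
  obtain ⟨_, h2⟩ := hE _ (hin a ha)
  exact h2

theorem stengle [Algebra ℝ A] (hfg : Algebra.FiniteType ℝ A) (S : Set A) (hS : S.Finite)
    (hK : KSet S = ∅) : IsInPreordering S (-1) := by
  classical
  by_contra hcon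
  obtain ⟨P, hsub, hP⟩ := exists_maxPre {a | IsInPreordering S a}
    ⟨fun a => .sq a, fun h1 h2 => .add h1 h2, fun h1 h2 => .mul h1 h2, hcon⟩
  obtain ⟨E, _, _, _, ψ, hivt, hψ⟩ := exists_ordered_hom hP
  letI : Algebra ℝ E := (ψ.comp (algebraMap ℝ A)).toAlgebra
  let ψ' : A →ₐ[ℝ] E := ⟨ψ, fun _ => rfl⟩
  obtain ⟨n, π, hπ⟩ := Algebra.FiniteType.iff_quotient_mvPolynomial''.1 hfg
  obtain ⟨G, hG⟩ := (isNoetherianRing_iff_ideal_fg (MvPolynomial (Fin n) ℝ)).1 inferInstance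
    (RingHom.ker π)
  obtain ⟨g, hg⟩ := hπ.hasRightInverse
  obtain ⟨x, hx⟩ := hivt.transfer n (fun i => ψ' (π (MvPolynomial.X i))) (G ∪ hS.toFinset.image g)
  have hψπ : ∀ q, MvPolynomial.aeval (fun i => ψ' (π (MvPolynomial.X i))) q = ψ' (π q) := by
    intro q
    have : MvPolynomial.aeval (fun i => ψ' (π (MvPolynomial.X i))) = ψ'.comp π := by
      ext i; simp
    rw [this]; rfl
  simp only [hψπ] at hx
  have hker : ∀ q, q ∈ RingHom.ker π → MvPolynomial.aeval x q = 0 := by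
    intro q hq
    have : RingHom.ker π ≤ RingHom.ker (MvPolynomial.aeval x : MvPolynomial (Fin n) ℝ →ₐ[ℝ] ℝ) := by
      rw [← hG, Ideal.span_le]
      intro r hr
      have h1 := hx r (Finset.mem_union_left _ hr)
      have h2 : π r = 0 := by
        have : r ∈ RingHom.ker π := by rw [← hG]; exact Ideal.subset_span hr
        exact this
      rw [h2, map_zero] at h1
      exact h1.eq_zero.1 rfl
    exact this hq
  let χ : A →ₐ[ℝ] ℝ := (Ideal.Quotient.liftₐ (RingHom.ker π) (MvPolynomial.aeval x) hker).comp
    (Ideal.quotientKerAlgEquivOfSurjective hπ).symm.toAlgHom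
  have hχ : ∀ q, χ (π q) = MvPolynomial.aeval x q := by
    intro q
    have : (Ideal.quotientKerAlgEquivOfSurjective hπ).symm (π q) = Ideal.Quotient.mk _ q := by
      rw [AlgEquiv.symm_apply_eq]; rfl
    change Ideal.Quotient.liftₐ (RingHom.ker π) (MvPolynomial.aeval x) hker
      ((Ideal.quotientKerAlgEquivOfSurjective hπ).symm (π q)) = _
    rw [this]; rfl
  have : χ ∈ KSet S := by
    apply nonneg_of_gens
    intro s hs
    rw [← hg s, hχ]
    have h1 := hx (g s) (Finset.mem_union_right _ (Finset.mem_image_of_mem _ (by simpa using hs)))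
    rw [← h1.nonneg, hg s]
    exact hψ s (hsub (IsInPreordering.gen hs))
  rw [hK] at this
  exact this

end Stengle
end FibreThm


namespace FibreThm
section Bdd
variable {A : Type*} [CommRing A] [Algebra ℝ A]

/-- `L` is nonnegative on the preordering generated by `S`. -/
def TPos (S : Set A) (L : A →ₗ[ℝ] ℝ) : Prop := ∀ a, IsInPreordering S a → 0 ≤ L a

/-- The functional `x ↦ L (t * x)`. -/
noncomputable def mulL (t : A) (L : A →ₗ[ℝ] ℝ) : A →ₗ[ℝ] ℝ := L.comp (LinearMap.mulLeft ℝ t)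

lemma mulL_apply (t : A) (L : A →ₗ[ℝ] ℝ) (x : A) : mulL t L x = L (t * x) := rfl

lemma TPos.mulL {S : Set A} {L : A →ₗ[ℝ] ℝ} (h : TPos S L) {t : A} (ht : IsInPreordering S t) :
    TPos S (mulL t L) := fun a ha => h _ (ht.mul ha)

lemma pre_zero (S : Set A) : IsInPreordering S 0 := by simpa using IsInPreordering.sq (S := S) 0
lemma pre_one (S : Set A) : IsInPreordering S 1 := by simpa using IsInPreordering.sq (S := S) 1

lemma pre_const (S : Set A) {r : ℝ} (hr : 0 ≤ r) : IsInPreordering S (algebraMap ℝ A r) := by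
  have := IsInPreordering.sq (S := S) (algebraMap ℝ A (Real.sqrt r))
  rwa [← map_pow, Real.sq_sqrt hr] at this

lemma pre_insert {S : Set A} {f x : A} (h : IsInPreordering (insert (-f) S) x) :
    ∃ p q, IsInPreordering S p ∧ IsInPreordering S q ∧ x = p - f * q := by
  induction h with
  | sq a => exact ⟨a ^ 2, 0, .sq a, pre_zero S, by ring⟩
  | gen ha =>
    rcases ha with rfl | ha
    · exact ⟨0, 1, pre_zero S, pre_one S, by ring⟩
    · exact ⟨_, 0, .gen ha, pre_zero S, by ring⟩
  | add _ _ h1 h2 =>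
    obtain ⟨p, q, hp, hq, rfl⟩ := h1
    obtain ⟨p', q', hp', hq', rfl⟩ := h2
    exact ⟨_, _, hp.add hp', hq.add hq', by ring⟩
  | mul _ _ h1 h2 =>
    obtain ⟨p, q, hp, hq, rfl⟩ := h1
    obtain ⟨p', q', hp', hq', rfl⟩ := h2
    exact ⟨_, _, (hp.mul hp').add ((IsInPreordering.sq f).mul (hq.mul hq')),
      (hp.mul hq').add (hq.mul hp'), by ring⟩

lemma TPos.cauchy {S : Set A} {L : A →ₗ[ℝ] ℝ} (h : TPos S L) (a b : A) :
    L (a * b) ^ 2 ≤ L (a ^ 2) * L (b ^ 2) := by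
  have := discrim_le_zero (a := L (a ^ 2)) (b := 2 * L (a * b)) (c := L (b ^ 2)) (by
    intro x
    have h1 := h _ (IsInPreordering.sq (x • a + b))
    have h2 : (x • a + b) ^ 2 = (x * x) • a ^ 2 + (2 * x) • (a * b) + b ^ 2 := by
      simp only [Algebra.smul_def, map_mul, map_ofNat]; ring
    rw [h2, map_add, map_add, map_smul, map_smul, smul_eq_mul, smul_eq_mul] at h1
    linarith)
  rw [discrim] at this
  nlinarith

lemma TPos.sub_sq {S : Set A} {L : A →ₗ[ℝ] ℝ} (hL : TPos S L) {c : ℝ} (hc : 0 < c) {p q h : A}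
    (hp : IsInPreordering S p) (hq : IsInPreordering S q)
    (he : (algebraMap ℝ A (c ^ 2) - h ^ 2) * p = 1 + q) :
    L (h ^ 2) ≤ c ^ 2 * L 1 := by
  by_contra! hcon
  set a : ℕ → ℝ := fun n => L (h ^ (2 * n)) with ha
  set b : ℕ → ℝ := fun n => L (h ^ (2 * n) * p) with hb
  have hsq : ∀ n, IsInPreordering S (h ^ (2 * n)) := fun n => by
    rw [mul_comm, pow_mul]; exact .sq _
  have ha0 : ∀ n, 0 ≤ a n := fun n => hL _ (hsq n)
  have hb0 : ∀ n, 0 ≤ b n := fun n => hL _ ((hsq n).mul hp)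
  have hab : ∀ n, a n + b (n + 1) ≤ c ^ 2 * b n := by
    intro n
    have h1 := hL _ ((hsq n).mul hq)
    have h2 : c ^ 2 • (h ^ (2 * n) * p) = h ^ (2 * n) + h ^ (2 * n) * q + h ^ (2 * (n + 1)) * p := by
      rw [Algebra.smul_def]
      linear_combination h ^ (2 * n) * he
    have h3 := congrArg L h2
    rw [map_add, map_add, map_smul, smul_eq_mul] at h3
    simp only [ha, hb]
    linarith
  have hbn : ∀ n, b n ≤ (c ^ 2) ^ n * b 0 := by
    intro n
    induction n with
    | zero => simp
    | succ n ih =>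
      have := hab n
      have := ha0 n
      have h5 : c ^ 2 * b n ≤ c ^ 2 * ((c ^ 2) ^ n * b 0) := by gcongr
      calc b (n + 1) ≤ c ^ 2 * b n := by linarith
        _ ≤ _ := h5
        _ = _ := by ring
  have han : ∀ n, a n ≤ (c ^ 2) ^ n * (c ^ 2 * b 0) := by
    intro n
    have h5 : c ^ 2 * b n ≤ c ^ 2 * ((c ^ 2) ^ n * b 0) := by gcongr; exact hbn n
    have := hab n
    have := hb0 (n + 1)
    calc a n ≤ c ^ 2 * b n := by linarith
      _ ≤ _ := h5
      _ = _ := by ring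
  have hlc : ∀ n, a (n + 1) ^ 2 ≤ a n * a (n + 2) := by
    intro n
    have h1 := hL.cauchy (h ^ n) (h ^ (n + 2))
    have e1 : h ^ n * h ^ (n + 2) = h ^ (2 * (n + 1)) := by ring
    have e2 : (h ^ n) ^ 2 = h ^ (2 * n) := by ring
    have e3 : (h ^ (n + 2)) ^ 2 = h ^ (2 * (n + 2)) := by ring
    rwa [e1, e2, e3] at h1
  have e0 : L 1 = a 0 := by simp [ha]
  have e1 : L (h ^ 2) = a 1 := by simp [ha]
  rw [e0, e1] at hcon
  have h0 : 0 < a 0 := by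
    rcases (ha0 0).lt_or_eq with h | h
    · exact h
    · have := hlc 0
      rw [← h] at this hcon
      simp only [zero_add, zero_mul, mul_zero] at this hcon
      nlinarith
  set r := a 1 / a 0 with hr
  have hrc : c ^ 2 < r := by rw [hr, lt_div_iff₀ h0]; exact hcon
  have hr0 : 0 < r := lt_trans (by positivity) hrc
  have hstep : ∀ n, 0 < a n ∧ r * a n ≤ a (n + 1) := by
    intro n
    induction n with
    | zero => exact ⟨h0, by rw [hr, div_mul_cancel₀ _ h0.ne']⟩
    | succ n ih =>
      obtain ⟨i1, i2⟩ := ih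
      have i3 : 0 < a (n + 1) := lt_of_lt_of_le (by positivity) i2
      refine ⟨i3, ?_⟩
      have := hlc n
      have h6 : a n * (r * a (n + 1)) ≤ a n * a (n + 2) := by nlinarith
      exact le_of_mul_le_mul_left h6 i1
  have hgrow : ∀ n, r ^ n * a 0 ≤ a n := by
    intro n
    induction n with
    | zero => simp
    | succ n ih =>
      calc r ^ (n + 1) * a 0 = r * (r ^ n * a 0) := by ring
        _ ≤ r * a n := by gcongr
        _ ≤ _ := (hstep n).2
  have hρ : 1 < r / c ^ 2 := by rw [lt_div_iff₀ (by positivity)]; linarith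
  obtain ⟨n, hn⟩ := pow_unbounded_of_one_lt (c ^ 2 * b 0 / a 0) hρ
  rw [div_pow, div_lt_div_iff₀ h0 (by positivity)] at hn
  have := hgrow n
  have := han n
  nlinarith

theorem bdd_pos (hfg : Algebra.FiniteType ℝ A) {S : Set A} (hS : S.Finite) {h : A} {C : ℝ}
    (hbd : ∀ χ ∈ KSet S, |χ h| ≤ C) : ∃ c : ℝ, 0 < c ∧ ∀ L : A →ₗ[ℝ] ℝ, TPos S L →
      TPos S (mulL (algebraMap ℝ A c - h) L) ∧ TPos S (mulL (algebraMap ℝ A c + h) L) := by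
  set c := |C| + 1 with hcdef
  have hc : 0 < c := by positivity
  have hK : KSet (insert (-(algebraMap ℝ A (c ^ 2) - h ^ 2)) S) = ∅ := by
    rw [Set.eq_empty_iff_forall_notMem]
    intro χ hχ
    have h1 : χ ∈ KSet S := nonneg_of_gens fun s hs => hχ _ (.gen (Set.mem_insert_of_mem _ hs))
    have h2 := hχ _ (.gen (Set.mem_insert _ _))
    have h3 := hbd χ h1
    rw [map_neg, map_sub, AlgHom.commutes, map_pow χ] at h2
    simp only [Algebra.algebraMap_self, RingHom.id_apply] at h2
    have h4 : |χ h| < c := by rw [hcdef]; linarith [le_abs_self C]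
    have := sq_lt_sq' (by linarith [abs_nonneg (χ h)]) h4
    rw [sq_abs] at this
    linarith
  have hm := stengle hfg _ (hS.insert _) hK
  obtain ⟨q, p, hq, hp, he⟩ := pre_insert hm
  have he' : (algebraMap ℝ A (c ^ 2) - h ^ 2) * p = 1 + q := by linear_combination he
  have hcc : (algebraMap ℝ A c) ^ 2 = algebraMap ℝ A (c ^ 2) := by rw [map_pow]
  have key : ∀ M : A →ₗ[ℝ] ℝ, TPos S M → 0 ≤ M (algebraMap ℝ A c - h) ∧
      0 ≤ M (algebraMap ℝ A c + h) := by
    intro M hM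
    have h1 := hM.sub_sq hc hp hq he'
    have h2 := hM _ (.sq (algebraMap ℝ A c - h))
    have h3 := hM _ (.sq (algebraMap ℝ A c + h))
    have e2 : (algebraMap ℝ A c - h) ^ 2 + (c ^ 2 • (1 : A) - h ^ 2) = (2 * c) • (algebraMap ℝ A c - h) := by
      simp only [Algebra.smul_def, map_mul, map_pow, map_ofNat]; ring
    have e3 : (algebraMap ℝ A c + h) ^ 2 + (c ^ 2 • (1 : A) - h ^ 2) = (2 * c) • (algebraMap ℝ A c + h) := by
      simp only [Algebra.smul_def, map_mul, map_pow, map_ofNat]; ring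
    have e2' := congrArg M e2
    have e3' := congrArg M e3
    simp only [map_add M, map_sub M (_ • _), map_smul, smul_eq_mul] at e2' e3'
    rw [← map_add M] at e3'
    constructor
    · have : 0 ≤ 2 * c * M (algebraMap ℝ A c - h) := by linarith
      exact nonneg_of_mul_nonneg_right this (by positivity)
    · have : 0 ≤ 2 * c * M (algebraMap ℝ A c + h) := by linarith
      exact nonneg_of_mul_nonneg_right this (by positivity)
  refine ⟨c, hc, fun L hL => ⟨fun t ht => ?_, fun t ht => ?_⟩⟩
  · have := (key _ (hL.mulL ht)).1
    rwa [mulL_apply, mul_comm] at this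
  · have := (key _ (hL.mulL ht)).2
    rwa [mulL_apply, mul_comm] at this

end Bdd
end FibreThm


namespace FibreThm
section Ext
variable {A : Type*} [CommRing A] [Algebra ℝ A]

lemma exists_span_seq (hfg : Algebra.FiniteType ℝ A) :
    ∃ e : ℕ → A, e 0 = 1 ∧ Submodule.span ℝ (Set.range e) = ⊤ := by
  obtain ⟨n, π, hπ⟩ := Algebra.FiniteType.iff_quotient_mvPolynomial''.1 hfg
  obtain ⟨g, hg⟩ := exists_surjective_nat (Fin n →₀ ℕ)
  let e : ℕ → A := fun k => Nat.casesOn k 1 (fun k => π (MvPolynomial.monomial (g k) 1))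
  refine ⟨e, rfl, ?_⟩
  rw [eq_top_iff]
  rintro x -
  obtain ⟨p, rfl⟩ := hπ x
  induction p using MvPolynomial.induction_on' with
  | monomial u a =>
    obtain ⟨k, rfl⟩ := hg u
    have : MvPolynomial.monomial (g k) a = a • MvPolynomial.monomial (g k) (1:ℝ) := by
      rw [MvPolynomial.smul_monomial]; simp
    rw [this, map_smul]
    exact Submodule.smul_mem _ _ (Submodule.subset_span ⟨k + 1, rfl⟩)
  | add p q h1 h2 => rw [map_add]; exact Submodule.add_mem _ h1 h2

lemma TPos.eq_zero {S : Set A} {L : A →ₗ[ℝ] ℝ} (h : TPos S L) (h1 : L 1 = 0) : L = 0 := by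
  ext x
  have := h.cauchy 1 x
  rw [one_pow, one_mul, h1, zero_mul] at this
  have := pow_eq_zero_iff (two_ne_zero) |>.1 (le_antisymm this (sq_nonneg _))
  simpa using this

lemma TPos.add {S : Set A} {L M : A →ₗ[ℝ] ℝ} (h : TPos S L) (h' : TPos S M) : TPos S (L + M) :=
  fun a ha => add_nonneg (h a ha) (h' a ha)

lemma TPos.smul {S : Set A} {L : A →ₗ[ℝ] ℝ} (h : TPos S L) {r : ℝ} (hr : 0 ≤ r) : TPos S (r • L) :=
  fun a ha => mul_nonneg hr (h a ha)

/-- the truncated cone -/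
def XSet (S : Set A) (e : ℕ → A) (ε : ℕ → ℝ) : Set (A → ℝ) :=
  {φ | ∃ L : A →ₗ[ℝ] ℝ, ⇑L = φ ∧ TPos S L ∧ ∀ N, ∑ n ∈ Finset.range N, ε n * L (e n ^ 2) ≤ 1}

lemma XSet_compact (S : Set A) (e : ℕ → A) (ε : ℕ → ℝ) (h0 : e 0 = 1)
    (hs : Submodule.span ℝ (Set.range e) = ⊤) (hε : ∀ n, 0 < ε n) : IsCompact (XSet S e ε) := by
  have hbd : ∀ x : A, ∃ B : ℝ, ∀ φ ∈ XSet S e ε, |φ x| ≤ B := by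
    intro x
    have hx : x ∈ Submodule.span ℝ (Set.range e) := by rw [hs]; trivial
    induction hx using Submodule.span_induction with
    | mem x hx =>
      obtain ⟨n, rfl⟩ := hx
      refine ⟨1 / ε 0 + 1 / ε n, ?_⟩
      rintro _ ⟨L, rfl, hL, hN⟩
      have hb : ∀ n, L (e n ^ 2) ≤ 1 / ε n := by
        intro n
        rw [le_div_iff₀ (hε n), mul_comm]
        refine le_trans ?_ (hN (n + 1))
        exact Finset.single_le_sum (f := fun n => ε n * L (e n ^ 2))
          (fun i _ => mul_nonneg (hε i).le (hL _ (.sq _))) (Finset.self_mem_range_succ n)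
      have h1 := hb 0
      have h2 := hb n
      have h3 := hL.cauchy (e 0) (e n)
      rw [h0, one_mul] at h3
      rw [h0] at h1
      have h4 := hL _ (.sq (1:A))
      have h5 := hL _ (.sq (e n))
      refine (abs_le_of_sq_le_sq (a := L (e n)) (b := L (1 ^ 2) + L (e n ^ 2)) ?_ (by positivity)).trans
        (add_le_add h1 h2)
      nlinarith [mul_nonneg h4 h5]
    | zero => exact ⟨0, by rintro _ ⟨L, rfl, -⟩; simp⟩
    | add x y _ _ hx hy =>
      obtain ⟨B, hB⟩ := hx
      obtain ⟨B', hB'⟩ := hy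
      refine ⟨B + B', ?_⟩
      intro φ hφ
      have h1 := hB φ hφ
      have h2 := hB' φ hφ
      obtain ⟨L, rfl, -⟩ := hφ
      rw [map_add]
      exact (abs_add_le _ _).trans (add_le_add h1 h2)
    | smul r x _ hx =>
      obtain ⟨B, hB⟩ := hx
      refine ⟨|r| * B, ?_⟩
      intro φ hφ
      have h1 := hB φ hφ
      obtain ⟨L, rfl, -⟩ := hφ
      rw [map_smul, smul_eq_mul, abs_mul]
      gcongr
  choose B hB using hbd
  have hsub : XSet S e ε ⊆ Set.pi Set.univ (fun x => Set.Icc (-B x) (B x)) := by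
    intro φ hφ x _
    exact abs_le.1 (hB x φ hφ)
  refine (isCompact_univ_pi fun x => isCompact_Icc).of_isClosed_subset ?_ hsub
  have heq : XSet S e ε = {φ | (∀ x y, φ (x + y) = φ x + φ y) ∧ (∀ (r : ℝ) x, φ (r • x) = r * φ x) ∧
      (∀ t, IsInPreordering S t → 0 ≤ φ t) ∧ ∀ N, ∑ n ∈ Finset.range N, ε n * φ (e n ^ 2) ≤ 1} := by
    ext φ
    constructor
    · rintro ⟨L, rfl, hL, hN⟩
      exact ⟨map_add L, fun r x => by simp, hL, hN⟩
    · rintro ⟨h1, h2, h3, h4⟩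
      exact ⟨⟨⟨φ, h1⟩, h2⟩, rfl, h3, h4⟩
  rw [heq]
  simp only [Set.setOf_and, Set.setOf_forall]
  refine IsClosed.inter ?_ (IsClosed.inter ?_ (IsClosed.inter ?_ ?_))
  · exact isClosed_iInter fun x => isClosed_iInter fun y => isClosed_eq (by fun_prop) (by fun_prop)
  · exact isClosed_iInter fun x => isClosed_iInter fun y => isClosed_eq (by fun_prop) (by fun_prop)
  · exact isClosed_iInter fun x => isClosed_iInter fun y => isClosed_le (by fun_prop) (by fun_prop)
  · exact isClosed_iInter fun x => isClosed_le (by fun_prop) (by fun_prop)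

theorem exists_extreme (hfg : Algebra.FiniteType ℝ A) (S : Set A) (L : A →ₗ[ℝ] ℝ) (hL : TPos S L)
    (a : A) (ha : L a < 0) : ∃ M : A →ₗ[ℝ] ℝ, TPos S M ∧ M a < 0 ∧
      ∀ M₁ M₂ : A →ₗ[ℝ] ℝ, TPos S M₁ → TPos S M₂ → M = M₁ + M₂ → ∃ r : ℝ, M₁ = r • M := by
  obtain ⟨e, h0, hs⟩ := exists_span_seq hfg
  set ε : ℕ → ℝ := fun n => (1 / 2) ^ (n + 1) / (1 + L (e n ^ 2)) with hεd
  have hLn : ∀ n, 0 ≤ L (e n ^ 2) := fun n => hL _ (.sq _)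
  have hε : ∀ n, 0 < ε n := fun n => by
    have := hLn n
    simp only [hεd]; positivity
  have hX := XSet_compact S e ε h0 hs hε
  have hLX : ⇑L ∈ XSet S e ε := by
    refine ⟨L, rfl, hL, fun N => ?_⟩
    have h1 : ∀ n, ε n * L (e n ^ 2) ≤ (1/2) ^ (n + 1) := by
      intro n
      have := hLn n
      simp only [hεd]
      rw [div_mul_eq_mul_div, div_le_iff₀ (by positivity)]
      gcongr
      linarith
    have h2 : ∀ N, ∑ n ∈ Finset.range N, ((1:ℝ)/2) ^ (n + 1) = 1 - (1/2) ^ N := by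
      intro N
      induction N with
      | zero => simp
      | succ n ih => rw [Finset.sum_range_succ, ih]; ring
    refine (Finset.sum_le_sum fun n _ => h1 n).trans ?_
    rw [h2]
    have : (0:ℝ) ≤ (1/2) ^ N := by positivity
    linarith
  obtain ⟨φ₀, hφ₀, hmin⟩ := hX.exists_isMinOn ⟨_, hLX⟩ (continuous_apply a).continuousOn
  have hmin' : ∀ φ ∈ XSet S e ε, φ₀ a ≤ φ a := fun φ hφ => hmin hφ
  have hm : φ₀ a < 0 := lt_of_le_of_lt (hmin' _ hLX) ha
  set m := φ₀ a
  set F : Set (A → ℝ) := XSet S e ε ∩ {φ | φ a = m} with hF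
  have hFc : IsCompact F := hX.inter_right (isClosed_eq (continuous_apply a) continuous_const)
  obtain ⟨φ, hφ⟩ := hFc.extremePoints_nonempty ⟨φ₀, hφ₀, rfl⟩
  rw [mem_extremePoints_iff_left] at hφ
  obtain ⟨⟨⟨M, rfl, hM, hMN⟩, hMa⟩, hext⟩ := hφ
  have hMa' : M a = m := hMa
  refine ⟨M, hM, by rw [hMa']; exact hm, ?_⟩
  -- the norm
  have hterm : ∀ M : A →ₗ[ℝ] ℝ, TPos S M → ∀ n, 0 ≤ ε n * M (e n ^ 2) :=
    fun M hM n => mul_nonneg (hε n).le (hM _ (.sq _))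
  have hsum : ∀ M : A →ₗ[ℝ] ℝ, TPos S M → (∀ N, ∑ n ∈ Finset.range N, ε n * M (e n ^ 2) ≤ 1) →
      Summable (fun n => ε n * M (e n ^ 2)) := fun M hM h =>
    summable_of_sum_range_le (hterm M hM) h
  set ν : (A →ₗ[ℝ] ℝ) → ℝ := fun M => ∑' n, ε n * M (e n ^ 2) with hν
  have hνz : ∀ M : A →ₗ[ℝ] ℝ, TPos S M → (∀ N, ∑ n ∈ Finset.range N, ε n * M (e n ^ 2) ≤ 1) →
      ν M ≤ 0 → M = 0 := by
    intro M hM h hz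
    apply hM.eq_zero
    have h1 := (hsum M hM h).le_tsum 0 (fun n _ => hterm M hM n)
    rw [h0, one_pow] at h1
    have h2 := hM 1 (pre_one S)
    have h3 : ε 0 * M 1 ≤ 0 := h1.trans hz
    have := hε 0
    nlinarith
  have hscale : ∀ M : A →ₗ[ℝ] ℝ, TPos S M → (∀ N, ∑ n ∈ Finset.range N, ε n * M (e n ^ 2) ≤ 1) →
      0 < ν M → ⇑((ν M)⁻¹ • M) ∈ XSet S e ε := by
    intro M hM h hz
    refine ⟨_, rfl, hM.smul (inv_nonneg.2 hz.le), fun N => ?_⟩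
    have h1 := (hsum M hM h).sum_le_tsum (Finset.range N) (fun n _ => hterm M hM n)
    have h2 : ∑ n ∈ Finset.range N, ε n * ((ν M)⁻¹ • M) (e n ^ 2) =
        (ν M)⁻¹ * ∑ n ∈ Finset.range N, ε n * M (e n ^ 2) := by
      rw [Finset.mul_sum]
      refine Finset.sum_congr rfl fun n _ => ?_
      simp; ring
    rw [h2, inv_mul_le_iff₀ hz, mul_one]
    exact h1
  have hM0 : M ≠ 0 := by rintro rfl; simp at hMa'; linarith
  have hνM : ν M = 1 := by
    have hpos : 0 < ν M := by
      by_contra hcon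
      exact hM0 (hνz M hM hMN (not_lt.1 hcon))
    have hle : ν M ≤ 1 := Real.tsum_le_of_sum_range_le (hterm M hM) hMN
    have h1 := hmin' _ (hscale M hM hMN hpos)
    rw [LinearMap.smul_apply, hMa', smul_eq_mul, ← div_eq_inv_mul, le_div_iff₀ hpos] at h1
    nlinarith
  intro M₁ M₂ h₁ h₂ hadd
  have hb : ∀ n, ε n * M (e n ^ 2) = ε n * M₁ (e n ^ 2) + ε n * M₂ (e n ^ 2) := by
    intro n; rw [hadd, LinearMap.add_apply]; ring
  have hN₁ : ∀ N, ∑ n ∈ Finset.range N, ε n * M₁ (e n ^ 2) ≤ 1 := fun N =>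
    (Finset.sum_le_sum fun n _ => by linarith [hb n, hterm M₂ h₂ n]).trans (hMN N)
  have hN₂ : ∀ N, ∑ n ∈ Finset.range N, ε n * M₂ (e n ^ 2) ≤ 1 := fun N =>
    (Finset.sum_le_sum fun n _ => by linarith [hb n, hterm M₁ h₁ n]).trans (hMN N)
  have hνadd : ν M₁ + ν M₂ = 1 := by
    rw [← hνM, hν]
    simp only [hb]
    exact ((hsum M₁ h₁ hN₁).tsum_add (hsum M₂ h₂ hN₂)).symm
  by_cases hz₁ : ν M₁ ≤ 0
  · exact ⟨0, by rw [hνz M₁ h₁ hN₁ hz₁, zero_smul]⟩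
  by_cases hz₂ : ν M₂ ≤ 0
  · exact ⟨1, by rw [hadd, hνz M₂ h₂ hN₂ hz₂, add_zero, one_smul]⟩
  rw [not_le] at hz₁ hz₂
  have hx₁ := hscale M₁ h₁ hN₁ hz₁
  have hx₂ := hscale M₂ h₂ hN₂ hz₂
  have ha₁ := hmin' _ hx₁
  have ha₂ := hmin' _ hx₂
  have hcomb : M = ν M₁ • ((ν M₁)⁻¹ • M₁) + ν M₂ • ((ν M₂)⁻¹ • M₂) := by
    rw [smul_inv_smul₀ hz₁.ne', smul_inv_smul₀ hz₂.ne', hadd]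
  have hca := congrArg (fun L : A →ₗ[ℝ] ℝ => L a) hcomb
  simp only [LinearMap.add_apply, LinearMap.smul_apply (ν M₁), LinearMap.smul_apply (ν M₂), smul_eq_mul (a := ν M₁),
    smul_eq_mul (a := ν M₂)] at hca
  set u := ((ν M₁)⁻¹ • M₁) a
  set v := ((ν M₂)⁻¹ • M₂) a
  have hu : u = m := by
    have : ν M₂ * m ≤ ν M₂ * v := by gcongr
    have : ν M₁ * u ≤ ν M₁ * m := by nlinarith
    exact le_antisymm (le_of_mul_le_mul_left this hz₁) ha₁
  have hv : v = m := by
    have : ν M₁ * m ≤ ν M₁ * u := by gcongr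
    have : ν M₂ * v ≤ ν M₂ * m := by nlinarith
    exact le_antisymm (le_of_mul_le_mul_left this hz₂) ha₂
  have := hext _ ⟨hx₁, hu⟩ _ ⟨hx₂, hv⟩ ⟨ν M₁, ν M₂, hz₁, hz₂, hνadd, by
    conv_rhs => rw [hcomb]
    rfl⟩
  refine ⟨ν M₁, ?_⟩
  rw [← DFunLike.coe_injective this, smul_inv_smul₀ hz₁.ne']

end Ext
end FibreThm


namespace FibreThm
open MeasureTheory
section Top
variable {A : Type*} [CommRing A] [Algebra ℝ A]

lemma exists_char {n : ℕ} (π : MvPolynomial (Fin n) ℝ →ₐ[ℝ] A) (hπ : Function.Surjective π)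
    (x : Fin n → ℝ) (hker : ∀ q, π q = 0 → MvPolynomial.aeval x q = (0:ℝ)) :
    ∃ χ : A →ₐ[ℝ] ℝ, ∀ q, χ (π q) = MvPolynomial.aeval x q := by
  let χ : A →ₐ[ℝ] ℝ := (Ideal.Quotient.liftₐ (RingHom.ker π) (MvPolynomial.aeval x) hker).comp
    (Ideal.quotientKerAlgEquivOfSurjective hπ).symm.toAlgHom
  refine ⟨χ, ?_⟩
  intro q
  have : (Ideal.quotientKerAlgEquivOfSurjective hπ).symm (π q) = Ideal.Quotient.mk _ q := by
    rw [AlgEquiv.symm_apply_eq]; rfl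
  change Ideal.Quotient.liftₐ (RingHom.ker π) (MvPolynomial.aeval x) hker
    ((Ideal.quotientKerAlgEquivOfSurjective hπ).symm (π q)) = _
  rw [this]; rfl

lemma continuous_char_apply (a : A) : Continuous (fun χ : A →ₐ[ℝ] ℝ => χ a) :=
  (continuous_apply a).comp continuous_induced_dom

lemma isClosed_KSet (S : Set A) : IsClosed (KSet S) := by
  simp only [KSet, Set.setOf_forall]
  exact isClosed_iInter fun a => isClosed_iInter fun _ =>
    isClosed_le continuous_const (continuous_char_apply a)

instance : BorelSpace (A →ₐ[ℝ] ℝ) := ⟨rfl⟩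

lemma char_eq {n : ℕ} (π : MvPolynomial (Fin n) ℝ →ₐ[ℝ] A) (χ : A →ₐ[ℝ] ℝ)
    (q : MvPolynomial (Fin n) ℝ) :
    χ (π q) = MvPolynomial.aeval (fun i => χ (π (MvPolynomial.X i))) q := by
  have : MvPolynomial.aeval (fun i => χ (π (MvPolynomial.X i))) = χ.comp π := by
    ext i; simp
  rw [this]; rfl

lemma char_embedding {n : ℕ} (π : MvPolynomial (Fin n) ℝ →ₐ[ℝ] A) (hπ : Function.Surjective π) :
    Topology.IsClosedEmbedding
      (fun (χ : A →ₐ[ℝ] ℝ) (i : Fin n) => χ (π (MvPolynomial.X i))) := by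
  refine ⟨⟨⟨?_⟩, ?_⟩, ?_⟩
  · apply le_antisymm
    · rw [← continuous_iff_le_induced]
      exact continuous_pi fun i => continuous_char_apply _
    · have : ∀ a : A, @Continuous _ _ (TopologicalSpace.induced
          (fun (χ : A →ₐ[ℝ] ℝ) (i : Fin n) => χ (π (MvPolynomial.X i))) inferInstance) _
          (fun χ : A →ₐ[ℝ] ℝ => χ a) := by
        intro a
        obtain ⟨q, rfl⟩ := hπ a
        rw [show (fun χ : A →ₐ[ℝ] ℝ => χ (π q)) = fun χ =>
          MvPolynomial.aeval (fun i => χ (π (MvPolynomial.X i))) q from funext fun χ => char_eq π χ q]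
        have h1 : Continuous (fun x : Fin n → ℝ => MvPolynomial.aeval x q) := by
          simp only [MvPolynomial.aeval_def, Algebra.algebraMap_self]
          exact MvPolynomial.continuous_eval q
        exact @Continuous.comp (A →ₐ[ℝ] ℝ) (Fin n → ℝ) ℝ (_) _ _
          (fun (χ : A →ₐ[ℝ] ℝ) (i : Fin n) => χ (π (MvPolynomial.X i)))
          (fun x : Fin n → ℝ => MvPolynomial.aeval x q) h1 continuous_induced_dom
      rw [charTop, ← continuous_iff_le_induced]
      exact @continuous_pi _ _ _ (_) _ _ this
  · intro χ χ' h
    ext a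
    obtain ⟨q, rfl⟩ := hπ a
    rw [char_eq π, char_eq π χ']
    simp only at h
    rw [h]
  · have : Set.range (fun (χ : A →ₐ[ℝ] ℝ) (i : Fin n) => χ (π (MvPolynomial.X i))) =
        {x | ∀ q, π q = 0 → MvPolynomial.aeval x q = (0:ℝ)} := by
      ext x
      constructor
      · rintro ⟨χ, rfl⟩ q hq
        rw [← char_eq π, hq, map_zero]
      · intro hx
        obtain ⟨χ, hχ⟩ := exists_char π hπ x hx
        exact ⟨χ, by funext i; simp [hχ]⟩
    rw [this]
    simp only [Set.setOf_forall]
    refine isClosed_iInter fun q => isClosed_iInter fun _ => isClosed_eq ?_ continuous_const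
    simp only [MvPolynomial.aeval_def, Algebra.algebraMap_self]
    exact MvPolynomial.continuous_eval q

lemma char_proper (hfg : Algebra.FiniteType ℝ A) :
    T2Space (A →ₐ[ℝ] ℝ) ∧ LocallyCompactSpace (A →ₐ[ℝ] ℝ) ∧ 
    ∃ p : A, (∀ χ : A →ₐ[ℝ] ℝ, 1 ≤ χ p) ∧ ∀ r : ℝ, IsCompact {χ : A →ₐ[ℝ] ℝ | χ p ≤ r} := by
  obtain ⟨n, π, hπ⟩ := Algebra.FiniteType.iff_quotient_mvPolynomial''.1 hfg
  have he := char_embedding π hπ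
  refine ⟨he.isEmbedding.t2Space, he.locallyCompactSpace,
    1 + ∑ i, (π (MvPolynomial.X i)) ^ 2, ?_, ?_⟩
  · intro χ
    simp only [map_add, map_one, map_sum, map_pow]
    have : 0 ≤ ∑ i, (χ (π (MvPolynomial.X i))) ^ 2 := Finset.sum_nonneg fun i _ => sq_nonneg _
    linarith
  · intro r
    have hc : IsCompact (Set.pi Set.univ (fun _ : Fin n => Set.Icc (-(|r| + 1)) (|r| + 1))) :=
      isCompact_univ_pi fun _ => isCompact_Icc
    refine (he.isCompact_preimage hc).of_isClosed_subset
      (isClosed_le (continuous_char_apply _) continuous_const) ?_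
    intro χ hχ i _
    simp only [Set.mem_setOf_eq, map_add, map_one, map_sum, map_pow] at hχ
    have h1 : (χ (π (MvPolynomial.X i))) ^ 2 ≤ ∑ i, (χ (π (MvPolynomial.X i))) ^ 2 :=
      Finset.single_le_sum (f := fun i => (χ (π (MvPolynomial.X i))) ^ 2)
        (fun i _ => sq_nonneg _) (Finset.mem_univ i)
    apply abs_le.1
    refine abs_le_of_sq_le_sq ?_ (by positivity)
    nlinarith [le_abs_self r, abs_nonneg r]
end Top
end FibreThm


namespace FibreThm
open MeasureTheory CompactlySupported Filter Topology
section Hav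
variable {A : Type*} [CommRing A] [Algebra ℝ A]

/-- Functions on `K` dominated by elements of `A`. -/
def Dom (K : Set (A →ₐ[ℝ] ℝ)) : Submodule ℝ (K → ℝ) where
  carrier := {φ | ∃ a : A, ∀ χ : K, |φ χ| ≤ χ.1 a}
  zero_mem' := ⟨0, fun χ => by simp⟩
  add_mem' := by
    rintro φ ψ ⟨a, ha⟩ ⟨b, hb⟩
    refine ⟨a + b, fun χ => ?_⟩
    rw [map_add]
    exact (abs_add_le _ _).trans (add_le_add (ha χ) (hb χ))
  smul_mem' := by
    rintro r φ ⟨a, ha⟩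
    refine ⟨|r| • a, fun χ => ?_⟩
    rw [map_smul, Pi.smul_apply, smul_eq_mul, smul_eq_mul, abs_mul]
    exact mul_le_mul_of_nonneg_left (ha χ) (abs_nonneg r)

lemma eval_mem_Dom (K : Set (A →ₐ[ℝ] ℝ)) (a : A) : (fun χ : K => χ.1 a) ∈ Dom K := by
  refine ⟨a ^ 2 + 1, fun χ => ?_⟩
  rw [map_add, map_pow, map_one, ← sq_abs]
  nlinarith [sq_nonneg (|χ.1 a| - 1), abs_nonneg (χ.1 a)]

lemma exists_ext (K : Set (A →ₐ[ℝ] ℝ)) (L : A →ₗ[ℝ] ℝ)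
    (hL : ∀ a, (∀ χ ∈ K, 0 ≤ χ a) → 0 ≤ L a) :
    ∃ ℓ : Dom K →ₗ[ℝ] ℝ, (∀ φ : Dom K, (∀ χ, 0 ≤ φ.1 χ) → 0 ≤ ℓ φ) ∧
      ∀ a, ℓ ⟨fun χ : K => χ.1 a, eval_mem_Dom K a⟩ = L a := by
  let s : PointedCone ℝ (A × Dom K) :=
    { carrier := {x | ∀ χ : K, 0 ≤ χ.1 x.1 + x.2.1 χ}
      zero_mem' := fun χ => by simp
      add_mem' := by
        intro x y hx hy χ
        have h1 := hx χ
        have h2 := hy χ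
        simp only [Prod.fst_add, Prod.snd_add, map_add, Submodule.coe_add, Pi.add_apply]
        linarith
      smul_mem' := by
        intro c x hx χ
        have h1 := hx χ
        have h2 : χ.1 (c • x).1 + (c • x).2.1 χ = (c : ℝ) * (χ.1 x.1 + x.2.1 χ) := by
          change χ.1 ((c:ℝ) • x.1) + ((c:ℝ) * x.2.1 χ) = _
          rw [map_smul, smul_eq_mul]; ring
        rw [h2]
        exact mul_nonneg c.2 h1 }
  have hs : ∀ x, x ∈ s ↔ ∀ χ : K, 0 ≤ χ.1 x.1 + x.2.1 χ := fun x => Iff.rfl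
  let f : (A × Dom K) →ₗ.[ℝ] ℝ :=
    { domain := Submodule.prod ⊤ ⊥
      toFun := (L.comp (LinearMap.fst ℝ A (Dom K))).domRestrict _ }
  obtain ⟨g, hg1, hg2⟩ := riesz_extension s f (by
    rintro ⟨⟨a, φ⟩, h1, h2⟩ h3
    have h2' : φ = 0 := h2
    subst h2'
    refine hL a fun χ hχ => ?_
    have := (hs _).1 h3 ⟨χ, hχ⟩
    simpa using this) (by
    rintro ⟨a, φ⟩
    obtain ⟨b, hb⟩ := φ.2
    refine ⟨⟨(b - a, 0), ⟨trivial, rfl⟩⟩, ?_⟩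
    rw [hs]
    intro χ
    have := neg_abs_le (φ.1 χ)
    have := hb χ
    simp
    linarith)
  refine ⟨g.comp (LinearMap.inr ℝ A (Dom K)), ?_, ?_⟩
  · intro φ hφ
    refine hg2 _ ((hs _).2 fun χ => ?_)
    simpa using hφ χ
  · intro a
    have h1 : g (a, 0) = L a := hg1 ⟨(a, 0), ⟨trivial, rfl⟩⟩
    set φ : Dom K := ⟨fun χ : K => χ.1 a, eval_mem_Dom K a⟩ with hφ
    have h2 : 0 ≤ g (a, -φ) := hg2 _ ((hs _).2 fun χ => by simp [hφ])
    have h3 : 0 ≤ g (-a, φ) := hg2 _ ((hs _).2 fun χ => by simp [hφ])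
    have e1 : ((a, -φ) : A × Dom K) = (a, 0) - (0, φ) := by simp
    have e2 : ((-a, φ) : A × Dom K) = (0, φ) - (a, 0) := by simp
    rw [e1, map_sub] at h2
    rw [e2, map_sub] at h3
    change g (0, φ) = L a
    linarith

theorem haviland (hfg : Algebra.FiniteType ℝ A) (S : Set A) (L : A →ₗ[ℝ] ℝ)
    (hL : ∀ a, (∀ χ ∈ KSet S, 0 ≤ χ a) → 0 ≤ L a) : IsKMomentFunctional S L := by
  obtain ⟨_, _, p, hp1, hpc⟩ := char_proper hfg
  set K := KSet S with hK
  have hKc : IsClosed K := isClosed_KSet S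
  haveI : LocallyCompactSpace K := hKc.isClosedEmbedding_subtypeVal.locallyCompactSpace
  obtain ⟨ℓ, hℓ, hℓL⟩ := exists_ext K L hL
  have hcK : ∀ a : A, Continuous (fun χ : K => χ.1 a) := fun a =>
    (continuous_char_apply a).comp continuous_subtype_val
  have hdom : ∀ φ : C_c(K, ℝ), (⇑φ : K → ℝ) ∈ Dom K := by
    intro φ
    obtain ⟨C, hC⟩ := φ.hasCompactSupport.exists_bound_of_continuous φ.continuous
    refine ⟨algebraMap ℝ A C, fun χ => ?_⟩
    rw [AlgHom.commutes]
    exact hC χ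
  let Λ₀ : C_c(K, ℝ) →ₗ[ℝ] ℝ :=
    { toFun := fun φ => ℓ ⟨φ, hdom φ⟩
      map_add' := fun φ ψ => by rw [← map_add]; rfl
      map_smul' := fun r φ => by rw [← map_smul]; rfl }
  let Λ : C_c(K, ℝ) →ₚ[ℝ] ℝ := PositiveLinearMap.mk₀ Λ₀ fun φ hφ => hℓ _ fun χ => hφ χ
  have hΛ : ∀ φ : C_c(K, ℝ), Λ φ = ℓ ⟨φ, hdom φ⟩ := fun φ => rfl
  set μ := RealRMK.rieszMeasure Λ with hμ
  have hIntegral : ∀ φ : C_c(K, ℝ), ∫ χ, φ χ ∂μ = ℓ ⟨φ, hdom φ⟩ := fun φ =>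
    RealRMK.integral_rieszMeasure Λ φ
  -- cutoffs
  let u : ℕ → K → ℝ := fun k χ => max 0 (min 1 ((k:ℝ) + 1 - χ.1 p))
  have huc : ∀ k, Continuous (u k) := fun k => by
    have := hcK p
    fun_prop
  have hu0 : ∀ k χ, 0 ≤ u k χ := fun k χ => le_max_left _ _
  have hu1 : ∀ k χ, u k χ ≤ 1 := fun k χ => max_le zero_le_one (min_le_left _ _)
  have hu2 : ∀ (k : ℕ) (χ : K), χ.1 p ≤ (k : ℝ) → u k χ = 1 := fun k χ h => by
    simp only [u]
    rw [min_eq_left (by linarith), max_eq_right zero_le_one]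
  have humono : ∀ χ, Monotone (fun k => u k χ) := fun χ k l hkl => by
    have : (k:ℝ) ≤ l := by exact_mod_cast hkl
    simp only [u]
    gcongr
  have hucs : ∀ k, HasCompactSupport (u k) := by
    intro k
    have hc : IsCompact {χ : K | χ.1 p ≤ k + 1} :=
      hKc.isClosedEmbedding_subtypeVal.isCompact_preimage (hpc (k + 1))
    refine HasCompactSupport.intro hc ?_
    intro χ hχ
    have : (k:ℝ) + 1 < χ.1 p := not_le.1 hχ
    simp only [u]
    rw [max_eq_left]
    exact (min_le_right _ _).trans (by linarith)
  have key : ∀ a : A, (∀ χ : K, 0 ≤ χ.1 a) →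
      Integrable (fun χ : K => χ.1 a) μ ∧ ∫ χ : K, χ.1 a ∂μ = L a := by
    intro a ha
    let F : ℕ → C_c(K, ℝ) := fun k =>
      ⟨⟨fun χ => u k χ * χ.1 a, (huc k).mul (hcK a)⟩, (hucs k).mul_right⟩
    have hFv : ∀ k χ, F k χ = u k χ * χ.1 a := fun k χ => rfl
    have hF0 : ∀ k χ, 0 ≤ F k χ := fun k χ => mul_nonneg (hu0 k χ) (ha χ)
    have hla : 0 ≤ L a := hL a fun χ hχ => ha ⟨χ, hχ⟩
    have hup : ∀ k, ∫ χ, F k χ ∂μ ≤ L a := by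
      intro k
      rw [hIntegral, ← hℓL a, ← sub_nonneg, ← map_sub]
      refine hℓ _ fun χ => ?_
      change 0 ≤ χ.1 a - u k χ * χ.1 a
      nlinarith [ha χ, hu1 k χ]
    have hlow : ∀ k : ℕ, L a - L (p * a) / (k + 1) ≤ ∫ χ, F (k + 1) χ ∂μ := by
      intro k
      have h1 : L a - L (p * a) / (k + 1) = L (a - (1 / ((k:ℝ) + 1)) • (p * a)) := by
        rw [map_sub, map_smul, smul_eq_mul]; ring
      rw [hIntegral, h1, ← hℓL, ← sub_nonneg, ← map_sub]
      refine hℓ _ fun χ => ?_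
      change 0 ≤ u (k + 1) χ * χ.1 a - χ.1 (a - (1 / ((k:ℝ) + 1)) • (p * a))
      rw [map_sub, map_smul, map_mul, smul_eq_mul]
      have h2 : 1 - u (k + 1) χ ≤ 1 / ((k:ℝ) + 1) * χ.1 p := by
        have := hp1 χ.1
        by_cases h : χ.1 p ≤ (k + 1 : ℕ)
        · rw [hu2 _ _ h, sub_self]; positivity
        · rw [not_le] at h
          push_cast at h
          have h3 : 1 ≤ 1 / ((k:ℝ) + 1) * χ.1 p := by
            rw [one_div_mul_eq_div, le_div_iff₀ (by positivity)]; linarith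
          linarith [hu0 (k + 1) χ]
      have := mul_le_mul_of_nonneg_right h2 (ha χ)
      nlinarith
    have hlim : Tendsto (fun k => ∫ χ, F k χ ∂μ) atTop (𝓝 (L a)) := by
      rw [← tendsto_add_atTop_iff_nat 1]
      refine tendsto_of_tendsto_of_tendsto_of_le_of_le ?_ tendsto_const_nhds hlow
        (fun k => hup (k + 1))
      have h1 : Tendsto (fun k : ℕ => L (p * a) * (1 / ((k:ℝ) + 1))) atTop (𝓝 (L (p * a) * 0)) :=
        tendsto_one_div_add_atTop_nhds_zero_nat.const_mul _
      have h2 := (tendsto_const_nhds (x := L a)).sub h1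
      simpa [div_eq_mul_inv] using h2
    have hFint : ∀ k, Integrable (F k) μ := fun k =>
      (F k).continuous.integrable_of_hasCompactSupport (F k).hasCompactSupport
    have hl1 : Tendsto (fun k => ∫⁻ χ, ENNReal.ofReal (F k χ) ∂μ) atTop
        (𝓝 (∫⁻ χ : K, ENNReal.ofReal (χ.1 a) ∂μ)) := by
      refine lintegral_tendsto_of_tendsto_of_monotone (fun k =>
        (F k).continuous.measurable.ennreal_ofReal.aemeasurable) ?_ ?_
      · refine ae_of_all _ fun χ k l hkl => ENNReal.ofReal_le_ofReal ?_
        exact mul_le_mul_of_nonneg_right (humono χ hkl) (ha χ)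
      · refine ae_of_all _ fun χ => ?_
        obtain ⟨N, hN⟩ := exists_nat_ge (χ.1 p)
        refine tendsto_const_nhds.congr' ?_
        filter_upwards [eventually_ge_atTop N] with k hk
        have : χ.1 p ≤ k := hN.trans (by exact_mod_cast hk)
        rw [hFv, hu2 k χ this, one_mul]
    have hl2 : Tendsto (fun k => ∫⁻ χ, ENNReal.ofReal (F k χ) ∂μ) atTop
        (𝓝 (ENNReal.ofReal (L a))) := by
      have : (fun k => ∫⁻ χ, ENNReal.ofReal (F k χ) ∂μ) =
          fun k => ENNReal.ofReal (∫ χ, F k χ ∂μ) := by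
        funext k
        rw [ofReal_integral_eq_lintegral_ofReal (hFint k) (ae_of_all _ (hF0 k))]
      rw [this]
      exact ENNReal.tendsto_ofReal hlim
    have heq := tendsto_nhds_unique hl1 hl2
    have hnn : 0 ≤ᵐ[μ] fun χ : K => χ.1 a := ae_of_all _ ha
    have hsm : AEStronglyMeasurable (fun χ : K => χ.1 a) μ :=
      (hcK a).measurable.aestronglyMeasurable
    refine ⟨⟨hsm, ?_⟩, ?_⟩
    · rw [hasFiniteIntegral_iff_ofReal hnn, heq]
      exact ENNReal.ofReal_lt_top
    · rw [integral_eq_lintegral_of_nonneg_ae hnn hsm, heq, ENNReal.toReal_ofReal hla]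
  have keyall : ∀ a : A, Integrable (fun χ : K => χ.1 a) μ ∧ ∫ χ : K, χ.1 a ∂μ = L a := by
    intro a
    obtain ⟨i1, e1⟩ := key ((a + 1) ^ 2) fun χ => by rw [map_pow]; positivity
    obtain ⟨i2, e2⟩ := key ((a - 1) ^ 2) fun χ => by rw [map_pow]; positivity
    have hfun : (fun χ : K => χ.1 a) =
        fun χ : K => (1/4 : ℝ) * (χ.1 ((a + 1) ^ 2) - χ.1 ((a - 1) ^ 2)) := by
      funext χ
      simp only [map_pow, map_add, map_sub, map_one]; ring
    have hLa : L a = (1/4 : ℝ) * (L ((a + 1) ^ 2) - L ((a - 1) ^ 2)) := by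
      rw [← map_sub, ← smul_eq_mul, ← map_smul]
      congr 1
      rw [show (a + 1) ^ 2 - (a - 1) ^ 2 = (4:ℝ) • a by
        rw [Algebra.smul_def, map_ofNat]; ring, smul_smul]
      norm_num
    rw [hfun]
    refine ⟨(i1.sub i2).const_mul _, ?_⟩
    rw [integral_const_mul, integral_sub i1 i2, e1, e2, hLa]
  have hme : MeasurableEmbedding (Subtype.val : K → (A →ₐ[ℝ] ℝ)) :=
    MeasurableEmbedding.subtype_coe hKc.measurableSet
  refine ⟨Measure.map Subtype.val μ, ?_, fun a => ⟨?_, ?_⟩⟩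
  · rw [hme.map_apply]
    have : (Subtype.val : K → (A →ₐ[ℝ] ℝ)) ⁻¹' (KSet S)ᶜ = ∅ := by
      ext χ; simpa using χ.2
    rw [this, measure_empty]
  · rw [hme.integrable_map_iff]
    exact (keyall a).1
  · rw [hme.integral_map]
    exact (keyall a).2.symm

end Hav
end FibreThm


namespace FibreThm
open MeasureTheory
section Main
variable {A : Type*} [CommRing A] [Algebra ℝ A]

lemma pre_mono {S S' : Set A} (h : S ⊆ S') {a : A} (ha : IsInPreordering S a) :
    IsInPreordering S' a := by
  induction ha with
  | sq a => exact .sq a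
  | gen ha => exact .gen (h ha)
  | add _ _ h1 h2 => exact .add h1 h2
  | mul _ _ h1 h2 => exact .mul h1 h2

variable {k m : ℕ} {f : Fin k → A} {h : Fin m → A} {lam : Fin m → ℝ}

lemma mem_KSet_fibre {χ : A →ₐ[ℝ] ℝ} :
    χ ∈ KSet (fibreGens f h lam) ↔ χ ∈ KSet (Set.range f) ∧ ∀ j, χ (h j) = lam j := by
  constructor
  · intro hχ
    refine ⟨fun a ha => hχ a (pre_mono Set.subset_union_left ha), fun j => ?_⟩
    have h1 := hχ (h j - algebraMap ℝ A (lam j))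
      (.gen (Or.inr (Set.mem_iUnion.2 ⟨j, Or.inl rfl⟩)))
    have h2 := hχ (algebraMap ℝ A (lam j) - h j)
      (.gen (Or.inr (Set.mem_iUnion.2 ⟨j, Or.inr rfl⟩)))
    rw [map_sub, AlgHom.commutes] at h1 h2
    simp only [Algebra.algebraMap_self, RingHom.id_apply] at h1 h2
    linarith
  · rintro ⟨h1, h2⟩
    apply nonneg_of_gens
    rintro s (hs | hs)
    · exact h1 s (.gen hs)
    · obtain ⟨j, rfl | hj⟩ := Set.mem_iUnion.1 hs
      · rw [map_sub, AlgHom.commutes, h2]; simp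
      · rw [Set.mem_singleton_iff.1 hj, map_sub, AlgHom.commutes, h2]; simp

theorem smp_forward (hS : HasSMP (Set.range f)) : HasSMP (fibreGens f h lam) := by
  intro L hL
  obtain ⟨μ, hμ, hIntegral⟩ := hS L fun a ha => hL a (pre_mono Set.subset_union_left ha)
  refine ⟨μ, ?_, hIntegral⟩
  have hae : ∀ᵐ χ ∂μ, χ ∈ KSet (Set.range f) := hμ
  have hj : ∀ j, ∀ᵐ χ : A →ₐ[ℝ] ℝ ∂μ, χ (h j) = lam j := by
    intro j
    set g := h j - algebraMap ℝ A (lam j) with hg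
    have h1 : 0 ≤ L (g * (algebraMap ℝ A (lam j) - h j)) :=
      hL _ (.mul (.gen (Or.inr (Set.mem_iUnion.2 ⟨j, Or.inl rfl⟩)))
        (.gen (Or.inr (Set.mem_iUnion.2 ⟨j, Or.inr rfl⟩))))
    have e : g * (algebraMap ℝ A (lam j) - h j) = - g ^ 2 := by rw [hg]; ring
    rw [e, map_neg] at h1
    obtain ⟨h2, h3⟩ := hIntegral (g ^ 2)
    have hnn : 0 ≤ fun χ : A →ₐ[ℝ] ℝ => χ (g ^ 2) := fun χ => by
      simp only [map_pow, Pi.zero_apply]; positivity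
    have h4 : ∫ χ : A →ₐ[ℝ] ℝ, χ (g ^ 2) ∂μ = 0 := le_antisymm (by linarith) (integral_nonneg hnn)
    have h5 := (integral_eq_zero_iff_of_nonneg hnn h2).1 h4
    filter_upwards [h5] with χ hχ
    have h6 : χ g ^ 2 = 0 := by simpa using hχ
    have h7 := (pow_eq_zero_iff two_ne_zero).1 h6
    rw [hg, map_sub, AlgHom.commutes] at h7
    simp only [Algebra.algebraMap_self, RingHom.id_apply] at h7
    linarith
  have hall : ∀ᵐ χ : A →ₐ[ℝ] ℝ ∂μ, ∀ j, χ (h j) = lam j := ae_all_iff.2 hj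
  have : ∀ᵐ χ : A →ₐ[ℝ] ℝ ∂μ, χ ∈ KSet (fibreGens f h lam) := by
    filter_upwards [hae, hall] with χ h1 h2
    exact mem_KSet_fibre.2 ⟨h1, h2⟩
  exact this

lemma fibre_pos {M : A →ₗ[ℝ] ℝ} (hM : TPos (Set.range f) M)
    (hlam : ∀ j x, M (h j * x) = lam j * M x) : TPos (fibreGens f h lam) M := by
  have key : ∀ x, IsInPreordering (fibreGens f h lam) x →
      ∃ t, IsInPreordering (Set.range f) t ∧ ∀ z, M (z * x) = M (z * t) := by
    have hz : ∀ j z, M (z * (h j - algebraMap ℝ A (lam j))) = 0 := by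
      intro j z
      have e : z * (h j - algebraMap ℝ A (lam j)) = h j * z - lam j • z := by
        rw [Algebra.smul_def]; ring
      rw [e, map_sub, map_smul, hlam, smul_eq_mul, sub_self]
    intro x hx
    induction hx with
    | sq a => exact ⟨a ^ 2, .sq a, fun z => rfl⟩
    | gen ha =>
      rcases ha with ha | ha
      · exact ⟨_, .gen ha, fun z => rfl⟩
      · refine ⟨0, pre_zero _, fun z => ?_⟩
        rw [mul_zero, map_zero]
        obtain ⟨j, rfl | hj⟩ := Set.mem_iUnion.1 ha
        · exact hz j z
        · rw [Set.mem_singleton_iff.1 hj, ← neg_sub, mul_neg, map_neg, hz, neg_zero]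
    | add _ _ h1 h2 =>
      obtain ⟨t, ht, e⟩ := h1
      obtain ⟨t', ht', e'⟩ := h2
      refine ⟨t + t', ht.add ht', fun z => ?_⟩
      rw [mul_add, mul_add, map_add, map_add, e, e']
    | @mul a b _ _ h1 h2 =>
      obtain ⟨t, ht, e⟩ := h1
      obtain ⟨t', ht', e'⟩ := h2
      refine ⟨t * t', ht.mul ht', fun z => ?_⟩
      rw [← mul_assoc, e', mul_right_comm, e, mul_assoc, mul_comm t' t]
  intro x hx
  obtain ⟨t, ht, e⟩ := key x hx
  have := e 1
  rw [one_mul, one_mul] at this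
  rw [this]
  exact hM t ht

theorem smp_backward (hfg : Algebra.FiniteType ℝ A)
    (hbd : ∃ C : ℝ, ∀ χ ∈ KSet (Set.range f), ∀ j : Fin m, |χ (h j)| ≤ C)
    (hfib : ∀ lam : Fin m → ℝ,
        (∃ χ ∈ KSet (Set.range f), ∀ j : Fin m, χ (h j) = lam j) →
        HasSMP (fibreGens f h lam)) : HasSMP (Set.range f) := by
  intro L hL
  refine haviland hfg _ L fun a ha => ?_
  by_contra hneg
  obtain ⟨M, hM, hMa, hext⟩ := exists_extreme hfg _ L hL a (not_le.1 hneg)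
  obtain ⟨C, hC⟩ := hbd
  have hex : ∀ j, ∃ l : ℝ, ∀ x, M (h j * x) = l * M x := by
    intro j
    obtain ⟨c, hc, hcL⟩ := bdd_pos hfg (Set.finite_range f) (h := h j) (C := C)
      (fun χ hχ => hC χ hχ j)
    obtain ⟨h1, h2⟩ := hcL M hM
    have hpos : 0 ≤ 1 / (2 * c) := by positivity
    obtain ⟨r, hr⟩ := hext _ _ (h1.smul hpos) (h2.smul hpos) (by
      ext x
      simp only [LinearMap.add_apply, LinearMap.smul_apply, mulL_apply, smul_eq_mul]
      rw [← mul_add, ← map_add]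
      have : (algebraMap ℝ A c - h j) * x + (algebraMap ℝ A c + h j) * x = (2 * c) • x := by
        rw [Algebra.smul_def, map_mul, map_ofNat]; ring
      rw [this, map_smul, smul_eq_mul]
      field_simp)
    refine ⟨c - 2 * c * r, fun x => ?_⟩
    have h3 := congrArg (fun L : A →ₗ[ℝ] ℝ => L x) hr
    simp only [LinearMap.smul_apply, mulL_apply, smul_eq_mul] at h3
    have h4 : (algebraMap ℝ A c - h j) * x = c • x - h j * x := by
      rw [Algebra.smul_def]; ring
    rw [h4, map_sub, map_smul, smul_eq_mul] at h3
    field_simp at h3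
    linarith
  choose lam hlam using hex
  have hMf := fibre_pos hM hlam
  by_cases hin : ∃ χ ∈ KSet (Set.range f), ∀ j : Fin m, χ (h j) = lam j
  · obtain ⟨μ, hμ, hIntegral⟩ := hfib lam hin M hMf
    have hae : ∀ᵐ χ ∂μ, χ ∈ KSet (fibreGens f h lam) := hμ
    have : 0 ≤ M a := by
      rw [(hIntegral a).2]
      apply integral_nonneg_of_ae
      filter_upwards [hae] with χ hχ
      exact ha χ (mem_KSet_fibre.1 hχ).1
    linarith
  · have hemp : KSet (fibreGens f h lam) = ∅ := by
      rw [Set.eq_empty_iff_forall_notMem]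
      intro χ hχ
      exact hin ⟨χ, mem_KSet_fibre.1 hχ⟩
    have hfin : (fibreGens f h lam).Finite :=
      (Set.finite_range f).union (Set.finite_iUnion fun j => Set.toFinite _)
    have h1 := hMf _ (stengle hfg _ hfin hemp)
    rw [map_neg] at h1
    have h2 := hM 1 (pre_one _)
    have := hM.eq_zero (by linarith)
    rw [this] at hMa
    simp at hMa

end Main
end FibreThm

/-- **Fibre theorem, (SMP) version.** Let `A` be a finitely generated commutative
real unital algebra, `T` the preordering generated by `f₁, …, f_k`, and let
`h₁, …, h_m ∈ A` be bounded on `K(T)`. Then `T` has (SMP) iff every fibre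
preordering `T_λ`, `λ ∈ h(K(T))`, has (SMP). -/
theorem fibre_theorem_SMP {A : Type*} [CommRing A] [Algebra ℝ A]
    (hfg : Algebra.FiniteType ℝ A) {k m : ℕ} (f : Fin k → A) (h : Fin m → A)
    (hbd : ∃ C : ℝ, ∀ χ ∈ KSet (Set.range f), ∀ j : Fin m, |χ (h j)| ≤ C) :
    HasSMP (Set.range f) ↔
      ∀ lam : Fin m → ℝ,
        (∃ χ ∈ KSet (Set.range f), ∀ j : Fin m, χ (h j) = lam j) →
        HasSMP (fibreGens f h lam) := by
  exact ⟨fun hS lam _ => FibreThm.smp_forward hS,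
    fun hfib => FibreThm.smp_backward hfg hbd hfib⟩
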